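/- arXiv:2409.16874 — 4 statements merged into one kernel-verified Lean document; each statement's English description precedes it below -/
import Mathlib

section
/- Let N ≥ 3, α > 0, and let p > 1 satisfy p + 1 < 2(N+α)/(N-2) (equivalently p + 1 < 2* + 2α/(N-2) with 2* = 2N/(N-2)). Then the Hénon problem -Δu = |x|^α u^p in B, u > 0 in B, u = 0 on ∂B, possesses a radial classical solution: there exists u continuous on the closed unit ball B̄, twice continuously differentiable on B, radially symmetric (u(x) depends only on |x|), with u > 0 in B, u = 0 on ∂B, and -Δu(x) = |x|^α u(x)^p for all x ∈ B. -/
open MeasureTheory Metric Set Filter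

noncomputable section

abbrev E (N : ℕ) := EuclideanSpace ℝ (Fin N)

/-- The Laplacian: sum of pure second partial derivatives. -/
def lap {N : ℕ} (u : E N → ℝ) (x : E N) : ℝ :=
  ∑ i, fderiv ℝ (fun y => fderiv ℝ u y (EuclideanSpace.single i 1)) x (EuclideanSpace.single i 1)


lemma ker_cont (α : ℝ) (hα : 0 < α) (d : ℕ) : Continuous (fun s : ℝ => s ^ (1+α) * ((1 - s^d)/d)) := by
  have : Continuous (fun s : ℝ => s ^ (1+α)) := Real.continuous_rpow_const (by linarith)
  fun_prop

lemma henon_exist (f : ℝ → ℝ) (p α : ℝ) (hp : 0 < p) (hα : 0 < α) (d : ℕ) (hd : 1 ≤ d)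
    (hf : ∀ x y, |f x - f y| ≤ p * |x - y|) (hf0 : ∀ x, 0 ≤ f x) (hf1 : ∀ x, f x ≤ 1) :
    ∃ v : ℝ → ℝ, Continuous v ∧ ∀ r, v r = 1 - |r| ^ (2+α) *
      ∫ s in (0:ℝ)..1, s ^ (1+α) * ((1 - s^d)/d) * f (v (r*s)) := by
  have hfc : Continuous f := by
    have : LipschitzWith (Real.toNNReal p) f := LipschitzWith.of_dist_le_mul (by
      intro x y
      rw [Real.dist_eq, Real.dist_eq, Real.coe_toNNReal _ hp.le]; exact hf x y)
    exact this.continuous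
  have hrc : Continuous (fun s : ℝ => |s| ^ (2+α)) :=
    (Real.continuous_rpow_const (by linarith : (0:ℝ) ≤ 2+α)).comp continuous_abs
  have hrc1 : Continuous (fun s : ℝ => s ^ (1+α)) := Real.continuous_rpow_const (by linarith)
  have hd' : (1:ℝ) ≤ d := by exact_mod_cast hd
  have hker0 : ∀ s ∈ Icc (0:ℝ) 1, 0 ≤ s ^ (1+α) * ((1 - s^d)/d) := by
    intro s hs
    have := pow_le_one₀ (n := d) hs.1 hs.2
    have h2 : 0 ≤ s ^ (1+α) := Real.rpow_nonneg hs.1 _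
    have : 0 ≤ (1 - s^d)/d := div_nonneg (by linarith) (by linarith)
    positivity
  have hker1 : ∀ s ∈ Icc (0:ℝ) 1, s ^ (1+α) * ((1 - s^d)/d) ≤ s ^ (1+α) := by
    intro s hs
    have h2 : 0 ≤ s ^ (1+α) := Real.rpow_nonneg hs.1 _
    have : (1 - s^d)/d ≤ 1 := by
      rw [div_le_one (by linarith)]
      have : 0 ≤ s^d := pow_nonneg hs.1 _
      linarith
    nlinarith
  have hs1 : ∀ s ∈ Icc (0:ℝ) 1, s ^ (1+α) ≤ 1 := fun s hs => Real.rpow_le_one hs.1 hs.2 (by linarith)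
  have hkc := ker_cont α hα d
  let I : (ℝ → ℝ) → ℝ → ℝ := fun w r => ∫ s in (0:ℝ)..1, s ^ (1+α) * ((1 - s^d)/d) *
      f (1 + Real.exp (p * |r*s| ^ (2+α)) * w (r*s))
  have hint : ∀ w : ℝ → ℝ, Continuous w → ∀ r, Continuous (fun s : ℝ => s ^ (1+α) * ((1 - s^d)/d) *
      f (1 + Real.exp (p * |r*s| ^ (2+α)) * w (r*s))) := by
    intro w hw r
    have := hrc.comp (continuous_const_mul r)
    simp only [Function.comp_def] at this
    fun_prop
  have hI : ∀ w : ℝ → ℝ, Continuous w → Continuous (I w) := by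
    intro w hw
    apply intervalIntegral.continuous_parametric_intervalIntegral_of_continuous'
    have := hrc.comp (continuous_mul (M := ℝ))
    have h2 := hkc.comp (continuous_snd (X := ℝ) (Y := ℝ))
    simp only [Function.comp_def] at this h2
    simp only [Function.uncurry_def]
    fun_prop
  have hIb : ∀ w : ℝ → ℝ, Continuous w → ∀ r, |I w r| ≤ 1 := by
    intro w hw r
    have := intervalIntegral.norm_integral_le_of_norm_le_const (a := (0:ℝ)) (b := 1) (C := 1)
      (f := fun s : ℝ => s ^ (1+α) * ((1 - s^d)/d) *
      f (1 + Real.exp (p * |r*s| ^ (2+α)) * w (r*s))) (by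
        intro s hs
        rw [uIoc_of_le zero_le_one] at hs
        have hs' : s ∈ Icc (0:ℝ) 1 := ⟨hs.1.le, hs.2⟩
        have h0 := hf0 (1 + Real.exp (p * |r*s| ^ (2+α)) * w (r*s))
        have h1 := hf1 (1 + Real.exp (p * |r*s| ^ (2+α)) * w (r*s))
        rw [Real.norm_of_nonneg (mul_nonneg (hker0 s hs') h0)]
        exact mul_le_one₀ ((hker1 s hs').trans (hs1 s hs')) h0 h1)
    simpa only [sub_zero, abs_one, mul_one, Real.norm_eq_abs] using this
  let T0 : (ℝ → ℝ) → ℝ → ℝ := fun w r => -(Real.exp (-(p * |r| ^ (2+α))) * |r| ^ (2+α) * I w r)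
  have hT0c : ∀ w : ℝ → ℝ, Continuous w → Continuous (T0 w) := by
    intro w hw
    have := hI w hw
    simp only [T0]; fun_prop
  have hT0b : ∀ w : ℝ → ℝ, Continuous w → ∀ r, ‖T0 w r‖ ≤ 1/p := by
    intro w hw r
    simp only [T0, norm_neg, norm_mul, Real.norm_eq_abs, Real.abs_exp]
    have hx : 0 ≤ |r| ^ (2+α) := by positivity
    rw [abs_of_nonneg hx]
    have h1 : Real.exp (-(p * |r| ^ (2+α))) * |r| ^ (2+α) ≤ 1/p := by
      rw [Real.exp_neg, le_div_iff₀ hp, mul_assoc, inv_mul_le_iff₀ (Real.exp_pos _)]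
      have := Real.add_one_le_exp (p * |r| ^ (2+α))
      linarith
    calc _ ≤ (1/p) * 1 := mul_le_mul h1 (hIb w hw r) (abs_nonneg _) (by positivity)
      _ = _ := by ring
  let T : BoundedContinuousFunction ℝ ℝ → BoundedContinuousFunction ℝ ℝ := fun w =>
    BoundedContinuousFunction.ofNormedAddCommGroup (T0 w) (hT0c w w.continuous) (1/p) (hT0b w w.continuous)
  have hT : ContractingWith (1/2) T := by
    refine ⟨by norm_num, LipschitzWith.of_dist_le_mul ?_⟩
    intro w z
    rw [BoundedContinuousFunction.dist_le (by positivity)]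
    intro r
    set D := dist w z with hD
    have hDn : 0 ≤ D := dist_nonneg
    have hx : 0 ≤ |r| ^ (2+α) := by positivity
    set X := |r| ^ (2+α) with hX
    have hdiff : |I w r - I z r| ≤ ∫ s in (0:ℝ)..1, D * (p * (s^(1+α) * Real.exp (p * X * s^(2+α)))) := by
      have e1 : I w r - I z r = ∫ s in (0:ℝ)..1, (s ^ (1+α) * ((1 - s^d)/d) *
          f (1 + Real.exp (p * |r*s| ^ (2+α)) * w (r*s)) - s ^ (1+α) * ((1 - s^d)/d) *
          f (1 + Real.exp (p * |r*s| ^ (2+α)) * z (r*s))) := by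
        rw [intervalIntegral.integral_sub ((hint w w.continuous r).intervalIntegrable _ _)
          ((hint z z.continuous r).intervalIntegrable _ _)]
      rw [e1, ← Real.norm_eq_abs]
      apply intervalIntegral.norm_integral_le_of_norm_le zero_le_one
      · refine Eventually.of_forall fun s hs => ?_
        have hs' : s ∈ Icc (0:ℝ) 1 := ⟨hs.1.le, hs.2⟩
        rw [← mul_sub, norm_mul, Real.norm_of_nonneg (hker0 s hs')]
        have e2 : |r*s| ^ (2+α) = X * s^(2+α) := by
          rw [abs_mul, abs_of_nonneg hs.1.le, Real.mul_rpow (abs_nonneg _) hs.1.le]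
        have h3 := hf (1 + Real.exp (p * |r*s| ^ (2+α)) * w (r*s)) (1 + Real.exp (p * |r*s| ^ (2+α)) * z (r*s))
        rw [e2, add_sub_add_left_eq_sub, ← mul_sub, abs_mul, Real.abs_exp] at h3
        have h4 : |w (r*s) - z (r*s)| ≤ D := by
          rw [← Real.dist_eq]; exact BoundedContinuousFunction.dist_coe_le_dist _
        have h5 : p * (Real.exp (p * (X * s^(2+α))) * |w (r*s) - z (r*s)|) ≤ p * (Real.exp (p * (X * s^(2+α))) * D) := by
          gcongr
        rw [Real.norm_eq_abs, e2]
        calc _ ≤ s^(1+α) * (p * (Real.exp (p * (X * s^(2+α))) * D)) :=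
              mul_le_mul (hker1 s hs') (h3.trans h5) (abs_nonneg _) (Real.rpow_nonneg hs.1.le _)
          _ = _ := by rw [mul_assoc p X]; ring
      · apply Continuous.intervalIntegrable
        have : Continuous (fun s : ℝ => s ^ (2+α)) := Real.continuous_rpow_const (by linarith)
        fun_prop
    have hftc : ∫ s in (0:ℝ)..1, (p * X * ((2+α) * s^(1+α))) * Real.exp (p * X * s^(2+α)) = Real.exp (p * X) - 1 := by
      rw [intervalIntegral.integral_eq_sub_of_hasDerivAt (f := fun s => Real.exp (p * X * s^(2+α)))]
      · simp [Real.zero_rpow (by linarith : 2+α ≠ 0)]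
      · intro s hs
        have := (((Real.hasDerivAt_rpow_const (x := s) (p := 2+α) (Or.inr (by linarith))).const_mul (p*X)).exp)
        refine this.congr_deriv ?_
        rw [show 2 + α - 1 = 1 + α by ring]; ring
      · apply Continuous.intervalIntegrable
        have : Continuous (fun s : ℝ => s ^ (2+α)) := Real.continuous_rpow_const (by linarith)
        fun_prop
    have hfin : X * ∫ s in (0:ℝ)..1, D * (p * (s^(1+α) * Real.exp (p * X * s^(2+α)))) = D / (2+α) * (Real.exp (p*X) - 1) := by
      rw [← hftc, ← intervalIntegral.integral_const_mul, ← intervalIntegral.integral_const_mul]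
      congr 1; ext s; field_simp
    have : dist (T w r) (T z r) = Real.exp (-(p * X)) * X * |I w r - I z r| := by
      change dist (T0 w r) (T0 z r) = _
      rw [Real.dist_eq]
      simp only [T0]
      rw [← hX, neg_sub_neg, ← mul_sub, abs_mul, abs_of_nonneg (by positivity), abs_sub_comm]
    rw [this]
    calc _ ≤ Real.exp (-(p * X)) * X * ∫ s in (0:ℝ)..1, D * (p * (s^(1+α) * Real.exp (p * X * s^(2+α)))) := by gcongr
      _ = Real.exp (-(p*X)) * (D / (2+α) * (Real.exp (p*X) - 1)) := by rw [mul_assoc, hfin]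
      _ = D / (2+α) * (1 - Real.exp (-(p*X))) := by
        have : Real.exp (-(p*X)) * Real.exp (p*X) = 1 := by rw [← Real.exp_add]; simp
        linear_combination D / (2+α) * this
      _ ≤ D / (2+α) * 1 := by
        gcongr
        have := Real.exp_pos (-(p*X)); linarith
      _ ≤ D / 2 * 1 := by gcongr; linarith
      _ = _ := by simp; ring
  obtain ⟨w, hw⟩ : ∃ w, T w = w := ⟨_, hT.fixedPoint_isFixedPt⟩
  refine ⟨fun r => 1 + Real.exp (p * |r| ^ (2+α)) * w r, by fun_prop, fun r => ?_⟩
  have : w r = T0 w r := by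
    conv_lhs => rw [← hw]
    rfl
  have he : Real.exp (p * |r| ^ (2+α)) * Real.exp (-(p * |r| ^ (2+α))) = 1 := by rw [← Real.exp_add]; simp
  change 1 + Real.exp (p * |r| ^ (2+α)) * w r = 1 - |r| ^ (2+α) * I w r
  rw [this]
  simp only [T0]
  linear_combination (-|r| ^ (2+α) * I w r) * he

lemma henon_ode (f : ℝ → ℝ) (p α : ℝ) (hp : 0 < p) (hα : 0 < α) (d : ℕ) (hd : 1 ≤ d)
    (hf : ∀ x y, |f x - f y| ≤ p * |x - y|) (hf0 : ∀ x, 0 ≤ f x) (hf1 : ∀ x, f x ≤ 1) :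
    ∃ v g m : ℝ → ℝ, Continuous v ∧ v 0 = 1 ∧ g 0 = 0 ∧ m 0 = 0 ∧
      (∀ r, HasDerivAt g (r ^ (1+α) * f (v r)) r) ∧
      (∀ r, HasDerivAt m (r ^ d * r ^ (1+α) * f (v r)) r) ∧
      (∀ r, 0 < r → d * v r = d - g r + m r / r ^ d) := by
  have hfc : Continuous f := by
    have : LipschitzWith (Real.toNNReal p) f := LipschitzWith.of_dist_le_mul (by
      intro x y
      rw [Real.dist_eq, Real.dist_eq, Real.coe_toNNReal _ hp.le]; exact hf x y)
    exact this.continuous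
  obtain ⟨v, hv, hve⟩ := henon_exist f p α hp hα d hd hf hf0 hf1
  have hrc1 : Continuous (fun s : ℝ => s ^ (1+α)) := Real.continuous_rpow_const (by linarith)
  have hd' : (1:ℝ) ≤ d := by exact_mod_cast hd
  have c1 : Continuous (fun t : ℝ => t ^ (1+α) * f (v t)) := by fun_prop
  have c2 : Continuous (fun t : ℝ => t ^ d * t ^ (1+α) * f (v t)) := by fun_prop
  refine ⟨v, fun r => ∫ t in (0:ℝ)..r, t ^ (1+α) * f (v t), fun r => ∫ t in (0:ℝ)..r, t ^ d * t ^ (1+α) * f (v t),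
    hv, ?_, by simp, by simp, ?_, ?_, ?_⟩
  · rw [hve 0]; simp [Real.zero_rpow (by linarith : 2+α ≠ 0)]
  · intro r; exact (c1.integral_hasStrictDerivAt 0 r).hasDerivAt
  · intro r; exact (c2.integral_hasStrictDerivAt 0 r).hasDerivAt
  · intro r hr
    have e1 : ∫ t in (0:ℝ)..r, (t ^ (1+α) * f (v t) - t ^ d * t ^ (1+α) * f (v t) / r^d) =
        (∫ t in (0:ℝ)..r, t ^ (1+α) * f (v t)) - (∫ t in (0:ℝ)..r, t ^ d * t ^ (1+α) * f (v t)) / r^d := by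
      rw [intervalIntegral.integral_sub (c1.intervalIntegrable _ _)
        ((c2.div_const _).intervalIntegrable _ _), intervalIntegral.integral_div]
    have e2 : r * ∫ s in (0:ℝ)..1, ((r*s) ^ (1+α) * f (v (r*s)) - (r*s) ^ d * (r*s) ^ (1+α) * f (v (r*s)) / r^d)
        = ∫ t in (0:ℝ)..r, (t ^ (1+α) * f (v t) - t ^ d * t ^ (1+α) * f (v t) / r^d) := by
      have := intervalIntegral.smul_integral_comp_mul_left (a := 0) (b := 1)
        (fun t : ℝ => (t ^ (1+α) * f (v t) - t ^ d * t ^ (1+α) * f (v t) / r^d)) r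
      simpa only [smul_eq_mul, mul_zero, mul_one] using this
    have e3 : ∫ s in (0:ℝ)..1, ((r*s) ^ (1+α) * f (v (r*s)) - (r*s) ^ d * (r*s) ^ (1+α) * f (v (r*s)) / r^d)
        = d * r^(1+α) * ∫ s in (0:ℝ)..1, s ^ (1+α) * ((1 - s^d)/d) * f (v (r*s)) := by
      rw [← intervalIntegral.integral_const_mul]
      apply intervalIntegral.integral_congr
      intro s hs
      rw [uIcc_of_le zero_le_one] at hs
      simp only
      rw [Real.mul_rpow hr.le hs.1, mul_pow]
      field_simp
    have e4 : |r| ^ (2+α) = r * r^(1+α) := by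
      rw [abs_of_pos hr, show 2 + α = 1 + (1+α) by ring, Real.rpow_add hr, Real.rpow_one]
    rw [hve r, e4]
    rw [e3, e1] at e2
    linear_combination -e2

/-- basic consequences -/
lemma henon_v_deriv (v g m F : ℝ → ℝ) (α : ℝ) (d : ℕ) (hd : 1 ≤ d)
    (hg : ∀ r, HasDerivAt g (r ^ (1+α) * F r) r)
    (hm : ∀ r, HasDerivAt m (r ^ d * r ^ (1+α) * F r) r)
    (hv : ∀ r, 0 < r → d * v r = d - g r + m r / r ^ d) (r : ℝ) (hr : 0 < r) :
    HasDerivAt v (-(m r / r ^ (d+1))) r := by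
  have hd' : (d:ℝ) ≠ 0 := by positivity
  have h1 : HasDerivAt (fun r => (d - g r + m r / r ^ d) / d) (-(m r / r ^ (d+1))) r := by
    have := (((hg r).const_sub (d:ℝ)).add ((hm r).div (hasDerivAt_pow d r) (by positivity))).div_const (d:ℝ)
    refine this.congr_deriv ?_
    obtain ⟨k, rfl⟩ : ∃ k, d = k+1 := ⟨d-1, by omega⟩
    simp only [Nat.add_sub_cancel]
    field_simp
    ring
  refine h1.congr_of_eventuallyEq ?_
  filter_upwards [lt_mem_nhds hr] with x hx
  rw [← hv x hx]; field_simp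

lemma henon_m_nonneg (m F : ℝ → ℝ) (α : ℝ) (d : ℕ)
    (hm : ∀ r, HasDerivAt m (r ^ d * r ^ (1+α) * F r) r) (hm0 : m 0 = 0)
    (hF0 : ∀ r, 0 ≤ F r) (r : ℝ) (hr : 0 ≤ r) : 0 ≤ m r := by
  have : MonotoneOn m (Ici 0) := by
    apply monotoneOn_of_deriv_nonneg (convex_Ici 0)
    · exact fun x _ => (hm x).continuousAt.continuousWithinAt
    · exact fun x _ => (hm x).differentiableAt.differentiableWithinAt
    · intro x hx
      rw [interior_Ici] at hx
      have hx : 0 < x := hx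
      rw [(hm x).deriv]
      have := hF0 x
      positivity
  rw [← hm0]; exact this (mem_Ici.2 le_rfl) hr hr

lemma henon_m_le (m F : ℝ → ℝ) (α : ℝ) (hα : 0 < α) (d : ℕ)
    (hm : ∀ r, HasDerivAt m (r ^ d * r ^ (1+α) * F r) r) (hm0 : m 0 = 0)
    (hF0 : ∀ r, 0 ≤ F r) (hF1 : ∀ r, F r ≤ 1) (r : ℝ) (hr : 0 < r) : m r ≤ r ^ d * r^(1+α) * r := by
  have := (convex_Icc 0 r).image_sub_le_mul_sub_of_deriv_le (f := m) (C := r ^ d * r^(1+α))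
    (fun x _ => (hm x).continuousAt.continuousWithinAt)
    (fun x _ => (hm x).differentiableAt.differentiableWithinAt)
    (by
      intro x hx
      rw [interior_Icc] at hx
      rw [(hm x).deriv]
      have h1 : x ^ d ≤ r ^ d := pow_le_pow_left₀ hx.1.le hx.2.le _
      have h2 : x ^ (1+α) ≤ r ^ (1+α) := Real.rpow_le_rpow hx.1.le hx.2.le (by linarith)
      have := hx.1
      have h3 : x ^ d * x ^ (1+α) ≤ r ^ d * r^(1+α) := by gcongr
      calc _ ≤ r ^ d * r^(1+α) * 1 := mul_le_mul h3 (hF1 x) (hF0 x) (by positivity)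
        _ = _ := mul_one _) 0 ⟨le_rfl, hr.le⟩ r ⟨hr.le, le_rfl⟩ hr.le
  simpa [hm0] using this

lemma henon_v_anti (v m : ℝ → ℝ) (d : ℕ) (hc : Continuous v)
    (hv : ∀ r, 0 < r → HasDerivAt v (-(m r / r ^ (d+1))) r) (hm0 : ∀ r, 0 ≤ r → 0 ≤ m r) :
    AntitoneOn v (Ici 0) := by
  apply antitoneOn_of_deriv_nonpos (convex_Ici 0) hc.continuousOn
  · intro x hx
    rw [interior_Ici] at hx
    exact (hv x hx).differentiableAt.differentiableWithinAt
  · intro x hx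
    rw [interior_Ici] at hx
    have hx : 0 < x := hx
    rw [(hv x hx).deriv]
    have := hm0 x hx.le
    have : 0 ≤ m x / x ^ (d+1) := by positivity
    linarith

/-- if v stays positive then g ≤ d -/
lemma henon_g_le (v g m F : ℝ → ℝ) (α : ℝ) (d : ℕ) (hd : 1 ≤ d)
    (hg : ∀ r, HasDerivAt g (r ^ (1+α) * F r) r)
    (hm : ∀ r, HasDerivAt m (r ^ d * r ^ (1+α) * F r) r)
    (hF0 : ∀ r, 0 ≤ F r)
    (hv : ∀ r, 0 < r → d * v r = d - g r + m r / r ^ d)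
    (hpos : ∀ r, 0 ≤ r → 0 < v r) (r0 : ℝ) (hr0 : 0 < r0) : g r0 ≤ d := by
  by_contra hcon
  push Not at hcon
  set δ := g r0 - d with hδ
  have hδ0 : 0 < δ := by linarith
  have gmono : MonotoneOn g (Ici r0) := by
    apply monotoneOn_of_deriv_nonneg (convex_Ici r0)
    · exact fun x _ => (hg x).continuousAt.continuousWithinAt
    · exact fun x _ => (hg x).differentiableAt.differentiableWithinAt
    · intro x hx
      rw [interior_Ici] at hx
      have hx : 0 < x := hr0.trans hx
      rw [(hg x).deriv]
      have := hF0 x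
      positivity
  let h : ℝ → ℝ := fun r => r ^ d * (d - g r + δ) + m r
  have hh : ∀ r, HasDerivAt h (d * r^(d-1) * (d - g r + δ)) r := by
    intro r
    have := ((hasDerivAt_pow d r).mul (((hg r).const_sub (d:ℝ)).add_const δ)).add (hm r)
    refine this.congr_deriv ?_
    ring
  have hanti : AntitoneOn h (Ici r0) := by
    apply antitoneOn_of_deriv_nonpos (convex_Ici r0)
    · exact fun x _ => (hh x).continuousAt.continuousWithinAt
    · exact fun x _ => (hh x).differentiableAt.differentiableWithinAt
    · intro x hx
      rw [interior_Ici] at hx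
      have hx0 : 0 < x := hr0.trans hx
      rw [(hh x).deriv]
      have := gmono (mem_Ici.2 le_rfl) (mem_Ici.2 (le_of_lt (mem_Ioi.1 hx))) (le_of_lt (mem_Ioi.1 hx))
      exact mul_nonpos_of_nonneg_of_nonpos (by positivity) (by linarith)
  have key : ∀ r, r0 ≤ r → r ^ d * δ ≤ h r0 := by
    intro r hr
    have h1 := hanti (mem_Ici.2 le_rfl) hr hr
    have hrp : 0 < r := hr0.trans_le hr
    have h2 : h r = r ^ d * (d * v r) + r^d * δ := by
      rw [hv r hrp]; simp only [h]; field_simp; ring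
    have := hpos r hrp.le
    have : 0 ≤ r ^ d * (d * v r) := by positivity
    linarith
  have h0 : 0 < h r0 := lt_of_lt_of_le (by positivity) (key r0 le_rfl)
  have := key (r0 + 1 + h r0 / δ) (by have : 0 < h r0/δ := by positivity
                                      linarith)
  have h3 : r0 + 1 + h r0 / δ ≤ (r0 + 1 + h r0 / δ)^d := by
    apply le_self_pow₀ _ (by omega)
    have : 0 < h r0/δ := by positivity
    linarith
  have h4 : (r0 + 1 + h r0 / δ) * δ ≤ h r0 := (mul_le_mul_of_nonneg_right h3 hδ0.le).trans this
  have h5 : h r0 / δ * δ = h r0 := by field_simp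
  nlinarith

/-- decay -/
lemma henon_decay (v m F : ℝ → ℝ) (α p : ℝ) (hα : 0 < α) (hp : 1 < p) (d : ℕ)
    (hm : ∀ r, HasDerivAt m (r ^ d * r ^ (1+α) * F r) r) (hm0 : m 0 = 0)
    (hF : ∀ r, 0 ≤ r → F r = v r ^ p) (hc : Continuous v)
    (hv : ∀ r, 0 < r → HasDerivAt v (-(m r / r ^ (d+1))) r)
    (hanti : AntitoneOn v (Ici 0))
    (hpos : ∀ r, 0 ≤ r → 0 < v r) :
    ∃ C : ℝ, 0 < C ∧ ∀ r, 0 < r → C * r ^ (2+α) ≤ v r ^ (1-p) := by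
  -- lower bound on m
  have hmlow : ∀ r, 0 < r → v r ^ p * (r ^ (d+1) * r ^ (1+α)) / (d+2+α) ≤ m r := by
    intro r hr
    let k : ℝ → ℝ := fun x => m x - v r ^ p * (x ^ (d+1) * x ^ (1+α)) / (d+2+α)
    have hk : ∀ x, 0 < x → HasDerivAt k (x ^ d * x ^ (1+α) * (F x - v r ^ p)) x := by
      intro x hx
      have := (hm x).sub ((((hasDerivAt_pow (d+1) x).mul (Real.hasDerivAt_rpow_const (x := x) (p := 1+α) (Or.inl hx.ne'))).const_mul (v r ^ p)).div_const (d+2+α))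
      refine this.congr_deriv ?_
      have e : x ^ (1+α) = x ^ (1+α-1) * x := by
        rw [← Real.rpow_add_one hx.ne']; congr 1; ring
      rw [e]
      have : (d:ℝ)+2+α ≠ 0 := by positivity
      simp only [Nat.add_sub_cancel]
      push_cast
      field_simp
      ring
    have kmono : MonotoneOn k (Icc 0 r) := by
      have hrc1 : Continuous (fun s : ℝ => s ^ (1+α)) := Real.continuous_rpow_const (by linarith)
      have hmc : Continuous m := continuous_iff_continuousAt.2 fun x => (hm x).continuousAt
      apply monotoneOn_of_deriv_nonneg (convex_Icc 0 r)
      · apply Continuous.continuousOn; simp only [k]; fun_prop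
      · intro x hx
        rw [interior_Icc] at hx
        exact (hk x hx.1).differentiableAt.differentiableWithinAt
      · intro x hx
        rw [interior_Icc] at hx
        rw [(hk x hx.1).deriv, hF x hx.1.le]
        have h1 := hanti (mem_Ici.2 hx.1.le) (mem_Ici.2 hr.le) hx.2.le
        have h2 := Real.rpow_le_rpow (hpos r hr.le).le h1 (by linarith : 0 ≤ p)
        have := hx.1
        exact mul_nonneg (by positivity) (by linarith)
    have := kmono ⟨le_rfl, hr.le⟩ ⟨hr.le, le_rfl⟩ hr.le
    simp [k, hm0] at this
    exact this
  set C : ℝ := (p-1)/((d+2+α)*(2+α)) with hC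
  have hC0 : 0 < C := div_pos (by linarith) (by positivity)
  refine ⟨C, hC0, fun r hr => ?_⟩
  let W : ℝ → ℝ := fun x => v x ^ (1-p) - C * x^(2+α)
  have hW : ∀ x, 0 < x → HasDerivAt W (-(m x / x ^ (d+1)) * (1-p) * v x ^ (1-p-1) - C * ((2+α) * x^(2+α-1))) x := by
    intro x hx
    exact ((hv x hx).rpow_const (Or.inl (hpos x hx.le).ne')).sub
      ((Real.hasDerivAt_rpow_const (x := x) (p := 2+α) (Or.inl hx.ne')).const_mul C)
  have Wmono : MonotoneOn W (Icc 0 r) := by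
    apply monotoneOn_of_deriv_nonneg (convex_Icc 0 r)
    · have hrc1 : Continuous (fun s : ℝ => s ^ (2+α)) := Real.continuous_rpow_const (by linarith)
      apply ContinuousOn.sub
      · exact hc.continuousOn.rpow_const fun x hx => Or.inl (hpos x hx.1).ne'
      · exact (hrc1.const_mul C).continuousOn
    · intro x hx
      rw [interior_Icc] at hx
      exact (hW x hx.1).differentiableAt.differentiableWithinAt
    · intro x hx
      rw [interior_Icc] at hx
      have hx0 := hx.1
      rw [(hW x hx.1).deriv]
      have hvx := hpos x hx0.le
      have h1 := hmlow x hx0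
      have e1 : v x ^ (1-p-1) = (v x ^ p)⁻¹ := by rw [← Real.rpow_neg hvx.le]; congr 1; ring
      have e2 : x ^ (2+α-1) = x^(1+α) := by congr 1; ring
      have hvp : 0 < v x ^ p := Real.rpow_pos_of_pos hvx _
      have e3 : x^(1+α) / (d+2+α) ≤ m x / x ^ (d+1) * (v x ^ p)⁻¹ := by
        rw [← div_eq_mul_inv, div_div, le_div_iff₀ (by positivity)]
        refine le_trans (le_of_eq ?_) h1
        ring
      have e4 : C * ((2+α) * x^(1+α)) = (p-1) * (x^(1+α) / (d+2+α)) := by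
        rw [hC]; field_simp
      rw [e1, e2, e4]
      have := mul_le_mul_of_nonneg_left e3 (by linarith : 0 ≤ p - 1)
      linarith
  have := Wmono ⟨le_rfl, hr.le⟩ ⟨hr.le, le_rfl⟩ hr.le
  have h0 : 0 ≤ W 0 := by
    simp only [W]
    rw [Real.zero_rpow (by linarith)]
    have := Real.rpow_nonneg (hpos 0 le_rfl).le (1-p)
    linarith
  have h1 : 0 ≤ W r := h0.trans this
  simp only [W] at h1
  linarith

/-- Pohozaev contradiction -/
lemma henon_contra (v g m F : ℝ → ℝ) (α p : ℝ) (hα : 0 < α) (hp : 1 < p) (d : ℕ)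
    (hsub : d * (p + 1) < 2 * (d + 2 + α))
    (hm0 : m 0 = 0)
    (hg : ∀ r, HasDerivAt g (r ^ (1+α) * F r) r)
    (hm : ∀ r, HasDerivAt m (r ^ d * r ^ (1+α) * F r) r)
    (hF : ∀ r, 0 ≤ r → F r = v r ^ p) (hc : Continuous v)
    (hv : ∀ r, 0 < r → d * v r = d - g r + m r / r ^ d)
    (hv' : ∀ r, 0 < r → HasDerivAt v (-(m r / r ^ (d+1))) r)
    (hmn : ∀ r, 0 ≤ r → 0 ≤ m r)
    (hgd : ∀ r, 0 < r → g r ≤ d)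
    (hpos : ∀ r, 0 ≤ r → 0 < v r)
    (C : ℝ) (hC : 0 < C) (hdecay : ∀ r, 0 < r → C * r ^ (2+α) ≤ v r ^ (1-p)) : False := by
  let P : ℝ → ℝ := fun r => -(m r * (d - g r)) / 2 + r^(d+1) * r^(1+α) * v r ^ (p+1) / (p+1)
  set c : ℝ := (d+2+α)/(p+1) - d/2 with hcdef
  have hc0 : 0 < c := by
    rw [hcdef, sub_pos, div_lt_div_iff₀ (by norm_num) (by linarith)]; linarith
  have hP : ∀ r, 0 < r → HasDerivAt P (c * (r^d * r^(1+α) * v r ^ (p+1))) r := by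
    intro r hr
    have hvr := hpos r hr.le
    have := ((((hm r).mul ((hg r).const_sub (d:ℝ))).neg).div_const 2).add
      ((((hasDerivAt_pow (d+1) r).mul (Real.hasDerivAt_rpow_const (x := r) (p := 1+α) (Or.inl hr.ne'))).mul
        ((hv' r hr).rpow_const (p := p+1) (Or.inl hvr.ne'))).div_const (p+1))
    refine this.congr_deriv ?_
    have e : r ^ (1+α) = r ^ (1+α-1) * r := by
      rw [← Real.rpow_add_one hr.ne']; congr 1; ring
    have e1 : v r ^ (p+1) = v r ^ p * v r := Real.rpow_add_one hvr.ne' _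
    have e2 : v r ^ (p+1-1) = v r ^ p := by congr 1; ring
    have hvr' := hv r hr
    have e3 : m r = r^d * (d * v r - d + g r) := by rw [hvr']; field_simp; ring
    have hpne : p + 1 ≠ 0 := by linarith
    simp only [Pi.mul_apply]
    rw [hF r hr.le, e2, e1, e, e3, hcdef]
    simp only [Nat.add_sub_cancel]
    push_cast
    field_simp
    ring
  have hmc : Continuous m := continuous_iff_continuousAt.2 fun x => (hm x).continuousAt
  have hgc : Continuous g := continuous_iff_continuousAt.2 fun x => (hg x).continuousAt
  have hrc1 : Continuous (fun s : ℝ => s ^ (1+α)) := Real.continuous_rpow_const (by linarith)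
  have hPc : ContinuousOn P (Ici 0) := by
    have : Continuous (fun r => v r ^ (p+1)) := hc.rpow_const fun _ => Or.inr (by linarith)
    apply Continuous.continuousOn; simp only [P]; fun_prop
  have hPm : StrictMonoOn P (Ici 0) := by
    apply strictMonoOn_of_deriv_pos (convex_Ici 0) hPc
    intro x hx
    rw [interior_Ici] at hx
    have hx : 0 < x := hx
    rw [(hP x hx).deriv]
    have := Real.rpow_pos_of_pos (hpos x hx.le) (p+1)
    positivity
  have hP0 : P 0 = 0 := by simp [P, hm0]
  have hP1 : 0 < P 1 := by
    rw [← hP0]; exact hPm (mem_Ici.2 le_rfl) (mem_Ici.2 zero_le_one) one_pos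
  set q : ℝ := (p+1)/(p-1) with hq
  have hq0 : 0 < q := div_pos (by linarith) (by linarith)
  set e : ℝ := (2+α)*q - (d+2+α) with he
  have he0 : 0 < e := by
    rw [he, hq, sub_pos, mul_div_assoc', lt_div_iff₀ (by linarith)]
    nlinarith
  have key : ∀ r, 1 ≤ r → P 1 ≤ (C⁻¹)^q * r^(-e) := by
    intro r hr
    have hr0 : 0 < r := by linarith
    have hvr := hpos r hr0.le
    have h1 : P 1 ≤ P r := hPm.monotoneOn (mem_Ici.2 zero_le_one) (mem_Ici.2 hr0.le) hr
    have h2 : P r ≤ r^(d+1) * r^(1+α) * v r ^ (p+1) := by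
      have a1 : 0 ≤ m r * (d - g r) := mul_nonneg (hmn r hr0.le) (by linarith [hgd r hr0])
      have a2 : r^(d+1) * r^(1+α) * v r ^ (p+1) / (p+1) ≤ r^(d+1) * r^(1+α) * v r ^ (p+1) :=
        div_le_self (by positivity) (by linarith)
      simp only [P]; linarith
    have h3 : v r ^ (p-1) ≤ C⁻¹ * r ^ (-(2+α)) := by
      have := hdecay r hr0
      rw [show 1 - p = -(p-1) by ring, Real.rpow_neg hvr.le] at this
      rw [Real.rpow_neg hr0.le, ← mul_inv]
      exact (le_inv_comm₀ (by positivity) (by positivity)).1 this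
    have h4 : v r ^ (p+1) ≤ (C⁻¹)^q * r ^ (-((2+α)*q)) := by
      have := Real.rpow_le_rpow (by positivity) h3 hq0.le
      rw [← Real.rpow_mul hvr.le, Real.mul_rpow (by positivity) (by positivity), ← Real.rpow_mul hr0.le] at this
      have hpne : p - 1 ≠ 0 := by linarith
      rw [show (p-1)*q = p+1 by rw [hq]; field_simp, neg_mul] at this
      exact this
    have h5 : r^(d+1) * r^(1+α) * r ^ (-((2+α)*q)) = r^(-e) := by
      rw [← Real.rpow_natCast, ← Real.rpow_add hr0, ← Real.rpow_add hr0]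
      congr 1; push_cast; rw [he]; ring
    calc P 1 ≤ r^(d+1) * r^(1+α) * v r ^ (p+1) := h1.trans h2
      _ ≤ r^(d+1) * r^(1+α) * ((C⁻¹)^q * r ^ (-((2+α)*q))) := by gcongr
      _ = _ := by rw [← h5]; ring
  have ht : Tendsto (fun r : ℝ => (C⁻¹)^q * r^(-e)) atTop (nhds 0) := by
    simpa using (tendsto_rpow_neg_atTop he0).const_mul ((C⁻¹)^q)
  have := ge_of_tendsto ht ((eventually_ge_atTop 1).mono key)
  linarith

lemma hasFDerivAt_zero_of_bound {X Y : Type*} [NormedAddCommGroup X] [NormedSpace ℝ X]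
    [NormedAddCommGroup Y] [NormedSpace ℝ Y] (f : X → Y) (K β : ℝ) (hβ : 0 < β)
    (h : ∀ y, ‖f y - f 0‖ ≤ K * ‖y‖ ^ β * ‖y‖) : HasFDerivAt f (0 : X →L[ℝ] Y) 0 := by
  rw [hasFDerivAt_iff_isLittleO_nhds_zero]
  have h1 : (fun y : X => f (0 + y) - f 0 - (0 : X →L[ℝ] Y) y) =O[nhds 0] (fun y : X => K * ‖y‖ ^ β * ‖y‖) := by
    apply Asymptotics.IsBigO.of_bound 1
    refine Eventually.of_forall fun y => ?_
    simp only [zero_add, _root_.zero_apply, sub_zero, one_mul]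
    exact (h y).trans (le_abs_self _)
  refine h1.trans_isLittleO ?_
  have h2 : Tendsto (fun y : X => K * ‖y‖ ^ β) (nhds 0) (nhds 0) := by
    have : Continuous (fun y : X => K * ‖y‖ ^ β) :=
      continuous_const.mul (continuous_norm.rpow_const fun _ => Or.inr hβ.le)
    simpa [Real.zero_rpow hβ.ne'] using this.tendsto 0
  have h3 : (fun y : X => K * ‖y‖ ^ β) =o[nhds 0] (fun _ => (1:ℝ)) :=
    (Asymptotics.isLittleO_one_iff ℝ).2 h2
  have h4 := h3.mul_isBigO (Asymptotics.isBigO_refl (fun y : X => ‖y‖) (nhds 0))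
  simp only [one_mul] at h4
  exact h4.of_norm_right

section radial
variable {X : Type*} [NormedAddCommGroup X] [InnerProductSpace ℝ X]

def innerJ (X : Type*) [NormedAddCommGroup X] [InnerProductSpace ℝ X] : X →L[ℝ] (X →L[ℝ] ℝ) :=
  LinearMap.mkContinuous₂ (innerₗ (X)) 1 (fun x y => by
    simpa using abs_real_inner_le_norm x y)

lemma innerJ_apply (x y : X) : innerJ X x y = inner ℝ x y := rfl

lemma innerJ_norm_apply (x : X) : ‖innerJ X x‖ = ‖x‖ := by
  have : innerJ X x = innerSL ℝ x := by ext y; rfl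
  rw [this, innerSL_apply_norm]

lemma innerJ_norm_le (X : Type*) [NormedAddCommGroup X] [InnerProductSpace ℝ X] : ‖innerJ X‖ ≤ 1 :=
  LinearMap.mkContinuous₂_norm_le _ zero_le_one _

set_option maxSynthPendingDepth 3 in
lemma radial_gen (V a b : ℝ → ℝ) (K α : ℝ) (hα : 0 < α)
    (hV : ∀ r, 0 < r → HasDerivAt V (r * a r) r)
    (ha : ∀ r, 0 < r → HasDerivAt a (b r) r)
    (hb : ContinuousOn b (Ioi 0))
    (hV0 : ∀ r, 0 < r → |V r - V 0| ≤ K * r ^ (1+α) * r)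
    (ha00 : a 0 = 0)
    (ha0 : ∀ r, 0 < r → |a r| ≤ K * r ^ α)
    (hb0 : ∀ r, 0 < r → |r * b r| ≤ K * r ^ α) :
    ContDiff ℝ 2 (fun x : X => V ‖x‖) ∧
    ∀ x e : X, fderiv ℝ (fun y => fderiv ℝ (fun x : X => V ‖x‖) y e) x e
      = a ‖x‖ * inner ℝ e e + (‖x‖⁻¹ * b ‖x‖) * (inner ℝ x e)^2 := by
  let G : X → (X →L[ℝ] ℝ) := fun x => a ‖x‖ • innerJ X x
  let H : X → (X →L[ℝ] (X →L[ℝ] ℝ)) := fun x =>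
    a ‖x‖ • (innerJ X) + (‖x‖⁻¹ * b ‖x‖) • (innerJ X x).smulRight (innerJ X x)
  have hnorm : ∀ x : X, x ≠ 0 → HasFDerivAt (fun y : X => ‖y‖) (‖x‖⁻¹ • innerJ X x) x := by
    intro x hx
    have hx' : 0 < ‖x‖ := norm_pos_iff.2 hx
    have h1 := (hasStrictFDerivAt_norm_sq x).hasFDerivAt.sqrt (by positivity)
    have e : (fun y : X => √(‖y‖^2)) = fun y => ‖y‖ := by
      ext y; exact Real.sqrt_sq (norm_nonneg _)
    rw [e] at h1
    refine h1.congr_fderiv ?_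
    rw [Real.sqrt_sq hx'.le]
    ext y
    simp [innerJ_apply]
    field_simp
  have h1 : ∀ x, HasFDerivAt (fun x : X => V ‖x‖) (G x) x := by
    intro x
    by_cases hx : x = 0
    · subst hx
      have : G 0 = 0 := by simp [G]
      rw [this]
      apply hasFDerivAt_zero_of_bound _ K (1+α) (by linarith)
      intro y
      by_cases hy : y = 0
      · subst hy; simp
      · simpa using hV0 ‖y‖ (norm_pos_iff.2 hy)
    · have hx' : 0 < ‖x‖ := norm_pos_iff.2 hx
      refine ((hV _ hx').comp_hasFDerivAt x (hnorm x hx)).congr_fderiv ?_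
      simp only [G, smul_smul]
      congr 1; field_simp
  have h2 : ∀ x, HasFDerivAt G (H x) x := by
    intro x
    by_cases hx : x = 0
    · subst hx
      have : H 0 = 0 := by simp [H, ha00]
      rw [this]
      apply hasFDerivAt_zero_of_bound _ K α hα
      intro y
      by_cases hy : y = 0
      · subst hy; simp
      · have := ha0 ‖y‖ (norm_pos_iff.2 hy)
        have e : G 0 = 0 := by simp [G]
        rw [e, sub_zero]
        simp only [G, norm_smul, innerJ_norm_apply, Real.norm_eq_abs]
        gcongr
    · have hx' : 0 < ‖x‖ := norm_pos_iff.2 hx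
      have := ((ha _ hx').comp_hasFDerivAt x (hnorm x hx)).smul ((innerJ X).hasFDerivAt (x := x))
      refine this.congr_fderiv ?_
      ext y z
      simp [H, innerJ_apply]
      ring
  have h3 : Continuous H := by
    rw [continuous_iff_continuousAt]
    intro x
    by_cases hx : x = 0
    · subst hx
      have e : H 0 = 0 := by simp [H, ha00]
      have hb : ∀ y, ‖H y‖ ≤ 2 * K * ‖y‖ ^ α := by
        intro y
        by_cases hy : y = 0
        · subst hy; rw [e]; simp [Real.zero_rpow hα.ne']
        · have hy' := norm_pos_iff.2 hy
          have b1 := ha0 _ hy'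
          have b2 := hb0 _ hy'
          have c1 : ‖a ‖y‖ • (innerJ X)‖ ≤ |a ‖y‖| * 1 := by
            rw [norm_smul, Real.norm_eq_abs]; gcongr; exact innerJ_norm_le X
          have c2 : ‖(‖y‖⁻¹ * b ‖y‖) • (innerJ X y).smulRight (innerJ X y)‖ = |‖y‖ * b ‖y‖| := by
            rw [norm_smul, ContinuousLinearMap.norm_smulRight_apply, innerJ_norm_apply, Real.norm_eq_abs,
              abs_mul, abs_mul, abs_inv, abs_norm]
            field_simp
          have := norm_add_le (a ‖y‖ • (innerJ X)) ((‖y‖⁻¹ * b ‖y‖) • (innerJ X y).smulRight (innerJ X y))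
          rw [c2] at this
          calc ‖H y‖ ≤ _ := this
            _ ≤ _ := by linarith
      rw [ContinuousAt, e]
      apply squeeze_zero_norm hb
      have : Continuous (fun y : X => 2 * K * ‖y‖ ^ α) :=
        continuous_const.mul (continuous_norm.rpow_const fun _ => Or.inr hα.le)
      simpa [Real.zero_rpow hα.ne'] using this.tendsto 0
    · have hx' : 0 < ‖x‖ := norm_pos_iff.2 hx
      have n1 : ContinuousAt (fun y : X => ‖y‖) x := continuous_norm.continuousAt
      have a1 : ContinuousAt (fun y : X => a ‖y‖) x := (ha _ hx').continuousAt.comp_of_eq n1 rfl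
      have b1 : ContinuousAt (fun y : X => b ‖y‖) x :=
        (hb.continuousAt (Ioi_mem_nhds hx')).comp_of_eq n1 rfl
      have i1 : ContinuousAt (fun y : X => ‖y‖⁻¹) x := n1.inv₀ hx'.ne'
      have s1 : Continuous (fun y : X => innerJ X y) := (innerJ X).continuous
      have s2 : Continuous (fun y : X => (innerJ X y).smulRight (innerJ X y)) := by
        have := ((ContinuousLinearMap.smulRightL ℝ (X) (X →L[ℝ] ℝ)).continuous.comp s1).clm_apply s1
        exact this
      exact (a1.smul continuousAt_const).add ((i1.mul b1).smul s2.continuousAt)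
  have hfu : fderiv ℝ (fun x : X => V ‖x‖) = G := funext fun x => (h1 x).fderiv
  have hfG : fderiv ℝ G = H := funext fun x => (h2 x).fderiv
  refine ⟨?_, fun x e => ?_⟩
  · rw [show (2 : WithTop ℕ∞) = 1 + 1 by norm_num, contDiff_succ_iff_fderiv]
    refine ⟨fun x => (h1 x).differentiableAt, by simp, ?_⟩
    rw [hfu, contDiff_one_iff_fderiv]
    exact ⟨fun x => (h2 x).differentiableAt, by rw [hfG]; exact h3⟩
  · rw [hfu]
    have := ((h2 x).clm_apply (hasFDerivAt_const e x)).fderiv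
    rw [this]
    simp only [H, _root_.add_apply, ContinuousLinearMap.comp_zero, zero_add, ContinuousLinearMap.flip_apply, _root_.smul_apply, ContinuousLinearMap.smulRight_apply, innerJ_apply, smul_eq_mul]
    ring
end radial

lemma radial_C2 {N : ℕ} (V a b : ℝ → ℝ) (K α : ℝ) (hα : 0 < α)
    (hV : ∀ r, 0 < r → HasDerivAt V (r * a r) r)
    (ha : ∀ r, 0 < r → HasDerivAt a (b r) r)
    (hb : ContinuousOn b (Ioi 0))
    (hV0 : ∀ r, 0 < r → |V r - V 0| ≤ K * r ^ (1+α) * r)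
    (ha00 : a 0 = 0)
    (ha0 : ∀ r, 0 < r → |a r| ≤ K * r ^ α)
    (hb0 : ∀ r, 0 < r → |r * b r| ≤ K * r ^ α) :
    ContDiff ℝ 2 (fun x : E N => V ‖x‖) ∧
    ∀ x : E N, lap (fun x : E N => V ‖x‖) x = N * a ‖x‖ + ‖x‖ * b ‖x‖ := by
  obtain ⟨h1, h2⟩ := radial_gen (X := E N) V a b K α hα hV ha hb hV0 ha00 ha0 hb0
  refine ⟨h1, fun x => ?_⟩
  unfold lap
  have : ∀ i, fderiv ℝ (fun y => fderiv ℝ (fun x : E N => V ‖x‖) y (EuclideanSpace.single i 1)) x (EuclideanSpace.single i 1)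
        = a ‖x‖ + (‖x‖⁻¹ * b ‖x‖) * (x i)^2 := by
    intro i
    rw [h2]
    simp [EuclideanSpace.inner_single_right]
  simp only [this, Finset.sum_add_distrib, ← Finset.mul_sum, Finset.sum_const, Finset.card_univ, Fintype.card_fin, nsmul_eq_mul]
  rw [← EuclideanSpace.real_norm_sq_eq]
  by_cases hx : ‖x‖ = 0
  · simp [hx]
  · field_simp

/-- truncated power nonlinearity -/
def clampPow (p : ℝ) (y : ℝ) : ℝ := (max 0 (min y 1)) ^ p

lemma clampPow_nonneg (p y : ℝ) : 0 ≤ clampPow p y := Real.rpow_nonneg (le_max_left _ _) _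

lemma clampPow_le_one (p y : ℝ) (hp : 1 < p) : clampPow p y ≤ 1 :=
  Real.rpow_le_one (le_max_left _ _) (max_le zero_le_one (min_le_right _ _)) (by linarith)

lemma clampPow_eq (p y : ℝ) (h0 : 0 ≤ y) (h1 : y ≤ 1) : clampPow p y = y ^ p := by
  rw [clampPow, min_eq_left h1, max_eq_right h0]

lemma clampPow_lip (p : ℝ) (hp : 1 < p) (x y : ℝ) : |clampPow p x - clampPow p y| ≤ p * |x - y| := by
  have h1 : ∀ a ∈ Icc (0:ℝ) 1, ∀ b ∈ Icc (0:ℝ) 1, ‖b ^ p - a ^ p‖ ≤ p * ‖b - a‖ := by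
    intro a ha b hb
    apply (convex_Icc (0:ℝ) 1).norm_image_sub_le_of_norm_hasDerivWithin_le (f := fun x : ℝ => x ^ p)
      (f' := fun x => p * x ^ (p-1)) _ _ ha hb
    · intro z hz
      exact (Real.hasDerivAt_rpow_const (Or.inr hp.le)).hasDerivWithinAt
    · intro z hz
      have h2 := Real.rpow_le_one hz.1 hz.2 (by linarith : 0 ≤ p - 1)
      have h3 := Real.rpow_nonneg hz.1 (p-1)
      rw [Real.norm_of_nonneg (by positivity)]
      nlinarith
  have hm : ∀ z : ℝ, max 0 (min z 1) ∈ Icc (0:ℝ) 1 :=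
    fun z => ⟨le_max_left _ _, max_le zero_le_one (min_le_right _ _)⟩
  refine (h1 _ (hm y) _ (hm x)).trans ?_
  have : |max 0 (min x 1) - max 0 (min y 1)| ≤ |x - y| := by
    have e1 := abs_max_sub_max_le_abs (min x 1) (min y 1) 0
    have e2 := abs_min_sub_min_le_max x 1 y 1
    rw [max_comm (0:ℝ), max_comm (0:ℝ)]
    simp only [sub_self, abs_zero] at e2
    rw [max_eq_left (abs_nonneg _)] at e2
    exact e1.trans e2
  rw [Real.norm_eq_abs]
  gcongr

lemma exists_first_zero (v : ℝ → ℝ) (hc : Continuous v) (h0 : v 0 = 1)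
    (hz : ¬ ∀ r, 0 ≤ r → 0 < v r) : ∃ R, 0 < R ∧ v R = 0 ∧ ∀ r, 0 ≤ r → r < R → 0 < v r := by
  push Not at hz
  obtain ⟨r1, hr1, hv1⟩ := hz
  let Z : Set ℝ := {r | 0 ≤ r ∧ v r ≤ 0}
  have hZc : IsClosed Z := (isClosed_le continuous_const continuous_id).inter (isClosed_le hc continuous_const)
  have hZb : BddBelow Z := ⟨0, fun r hr => hr.1⟩
  have hZn : Z.Nonempty := ⟨r1, hr1, hv1⟩
  have hmem : sInf Z ∈ Z := hZc.csInf_mem hZn hZb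
  have hlt : ∀ r, 0 ≤ r → r < sInf Z → 0 < v r := by
    intro r hr hrl
    by_contra hcon
    exact absurd (csInf_le hZb ⟨hr, not_lt.1 hcon⟩) (not_le.2 hrl)
  have hpos : 0 < sInf Z := by
    rcases hmem.1.lt_or_eq with h | h
    · exact h
    · have := hmem.2; rw [← h, h0] at this; linarith
  refine ⟨sInf Z, hpos, le_antisymm hmem.2 ?_, hlt⟩
  have ht : Tendsto v (nhdsWithin (sInf Z) (Iio (sInf Z))) (nhds (v (sInf Z))) :=
    (hc.tendsto _).mono_left nhdsWithin_le_nhds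
  refine ge_of_tendsto ht ?_
  filter_upwards [Ioo_mem_nhdsLT hpos] with x hx using (hlt x hx.1.le hx.2).le

/-- Ni's theorem: the Hénon problem -Δu = |x|^α u^p in the unit ball has a radial
positive classical solution for p+1 below the enlarged critical exponent 2(N+α)/(N-2). -/
theorem stmt2 {N : ℕ} (hN : 3 ≤ N) (α p : ℝ) (hα : 0 < α) (hp : 1 < p)
    (hsub : p + 1 < 2 * ((N : ℝ) + α) / ((N : ℝ) - 2)) :
    ∃ u : E N → ℝ,
      ContinuousOn u (closedBall 0 1) ∧
      ContDiffOn ℝ 2 u (ball 0 1) ∧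
      (∀ x y : E N, ‖x‖ = ‖y‖ → u x = u y) ∧
      (∀ x ∈ ball (0 : E N) 1, 0 < u x) ∧
      (∀ x : E N, ‖x‖ = 1 → u x = 0) ∧
      (∀ x ∈ ball (0 : E N) 1, -lap u x = ‖x‖ ^ α * u x ^ p) := by
  obtain ⟨d, rfl⟩ : ∃ d, N = d + 2 := ⟨N - 2, by omega⟩
  have hd : 1 ≤ d := by omega
  have hdR : (1:ℝ) ≤ d := by exact_mod_cast hd
  have hsub' : d * (p + 1) < 2 * (d + 2 + α) := by
    push_cast at hsub
    rw [lt_div_iff₀ (by linarith)] at hsub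
    nlinarith
  obtain ⟨v, g, m, hc, hv0, hg0, hm0, hg, hm, hv⟩ := henon_ode (clampPow p) p α (by linarith) hα d hd
    (clampPow_lip p hp) (clampPow_nonneg p) (fun y => clampPow_le_one p y hp)
  let F : ℝ → ℝ := fun r => clampPow p (v r)
  have hF0 : ∀ r, 0 ≤ F r := fun r => clampPow_nonneg p _
  have hF1 : ∀ r, F r ≤ 1 := fun r => clampPow_le_one p _ hp
  have hm' : ∀ r, HasDerivAt m (r ^ d * r ^ (1+α) * F r) r := hm
  have hg' : ∀ r, HasDerivAt g (r ^ (1+α) * F r) r := hg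
  have hvd := henon_v_deriv v g m F α d hd hg' hm' hv
  have hmn := henon_m_nonneg m F α d hm' hm0 hF0
  have hml := henon_m_le m F α hα d hm' hm0 hF0 hF1
  have hanti := henon_v_anti v m d hc hvd hmn
  have hv1 : ∀ r, 0 ≤ r → v r ≤ 1 := by
    intro r hr
    rw [← hv0]; exact hanti (mem_Ici.2 le_rfl) (mem_Ici.2 hr) hr
  have hz : ¬ ∀ r, 0 ≤ r → 0 < v r := by
    intro hpos
    have hF : ∀ r, 0 ≤ r → F r = v r ^ p := fun r hr => clampPow_eq p _ (hpos r hr).le (hv1 r hr)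
    obtain ⟨C, hC, hdec⟩ := henon_decay v m F α p hα hp d hm' hm0 hF hc hvd hanti hpos
    exact henon_contra v g m F α p hα hp d hsub' hm0 hg' hm' hF hc hv hvd hmn
      (henon_g_le v g m F α d hd hg' hm' hF0 hv hpos) hpos C hC hdec
  obtain ⟨R, hR, hvR, hvpos⟩ := exists_first_zero v hc hv0 hz
  -- bounds
  have hg2 : ∀ r, HasDerivAt g (r ^ 0 * r ^ (1+α) * F r) r := by simpa using hg'
  have hgn := henon_m_nonneg g F α 0 hg2 hg0 hF0
  have hgl : ∀ r, 0 < r → g r ≤ r ^ (1+α) * r := by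
    simpa using henon_m_le g F α hα 0 hg2 hg0 hF0 hF1
  have hFc : Continuous F := by
    have h1 : Continuous (fun y : ℝ => clampPow p y) :=
      (continuous_const.max (continuous_id.min continuous_const)).rpow_const
        fun _ => Or.inr (by linarith)
    exact h1.comp hc
  let A : ℝ → ℝ := fun r => -(m r / r ^ (d+2))
  let B : ℝ → ℝ := fun r => (d+2) * m r / r^(d+3) - r^(1+α) * F r / r^2
  have hA : ∀ r, 0 < r → HasDerivAt A (B r) r := by
    intro r hr
    have := ((hm' r).div (hasDerivAt_pow (d+2) r) (by positivity)).neg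
    refine this.congr_deriv ?_
    simp only [B]
    rw [show d + 2 - 1 = d + 1 by omega]
    push_cast
    field_simp
    ring
  have hmb : ∀ r, 0 < r → m r / r^(d+2) ≤ r ^ α := by
    intro r hr
    rw [div_le_iff₀ (by positivity)]
    refine (hml r hr).trans (le_of_eq ?_)
    rw [show 1 + α = α + 1 by ring, Real.rpow_add_one hr.ne']; ring
  have hra : ∀ r : ℝ, 0 < r → r ^ (1+α) = r ^ α * r := by
    intro r hr
    rw [show 1 + α = α + 1 by ring, Real.rpow_add_one hr.ne']
  have hAb : ∀ r, 0 < r → |A r| ≤ r ^ α := by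
    intro r hr
    have := hmn r hr.le
    simp only [A]
    rw [abs_neg, abs_of_nonneg (by positivity)]; exact hmb r hr
  have hrB : ∀ r, 0 < r → r * B r = (d+2) * (m r / r^(d+2)) - r ^ α * F r := by
    intro r hr
    simp only [B]; rw [hra r hr]; field_simp; ring
  have hBb : ∀ r, 0 < r → |r * B r| ≤ (d+2) * r ^ α := by
    intro r hr
    rw [hrB r hr, abs_le]
    have h1 := hmb r hr
    have h2 : 0 ≤ m r / r^(d+2) := div_nonneg (hmn r hr.le) (by positivity)
    have h3 : 0 < r ^ α := Real.rpow_pos_of_pos hr _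
    have h4 := hF0 r
    have h5 := hF1 r
    constructor <;> nlinarith [mul_nonneg (by positivity : (0:ℝ) ≤ d+2) h2, mul_nonneg h3.le h4,
      mul_le_mul_of_nonneg_left h1 (by positivity : (0:ℝ) ≤ d+2), mul_le_mul_of_nonneg_left h5 h3.le,
      mul_nonneg (by positivity : (0:ℝ) ≤ d) h3.le]
  have hvb : ∀ r, 0 < r → |v r - 1| ≤ r ^ (1+α) * r := by
    intro r hr
    have h1 := hv r hr
    have h2 := hgl r hr
    have h3 := hv1 r hr.le
    have h4 : 0 ≤ m r / r^d := div_nonneg (hmn r hr.le) (by positivity)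
    rw [abs_sub_comm, abs_of_nonneg (by linarith)]
    nlinarith
  have hBc : ContinuousOn B (Ioi 0) := by
    have hmc : Continuous m := continuous_iff_continuousAt.2 fun x => (hm x).continuousAt
    have hrc1 : Continuous (fun s : ℝ => s ^ (1+α)) := Real.continuous_rpow_const (by linarith)
    apply ContinuousOn.sub
    · exact (continuous_const.mul hmc).continuousOn.div (continuous_pow _).continuousOn
        fun x hx => pow_ne_zero _ (ne_of_gt hx)
    · exact (hrc1.mul hFc).continuousOn.div (continuous_pow _).continuousOn
        fun x hx => pow_ne_zero _ (ne_of_gt hx)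
  -- scaling
  set L : ℝ := R ^ ((2+α)/(p-1)) with hL
  have hL0 : 0 < L := Real.rpow_pos_of_pos hR _
  have hLp : L ^ p = L * (R ^ 2 * R ^ α) := by
    have e : L ^ (p-1) = R ^ (2+α) := by
      rw [hL, ← Real.rpow_mul hR.le]; congr 1
      have : p - 1 ≠ 0 := by linarith
      field_simp
    have : L ^ p = L ^ (p-1) * L := by rw [← Real.rpow_add_one hL0.ne']; congr 1; ring
    rw [this, e, Real.rpow_add hR, Real.rpow_two]; ring
  have hscale : ∀ r : ℝ, HasDerivAt (fun r => R * r) R r := by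
    intro r; simpa using (hasDerivAt_id r).const_mul R
  let K : ℝ := L * R^2 * R^α * (d+2)
  have hrad := radial_C2 (N := d+2) (fun r => L * v (R * r)) (fun r => L * R^2 * A (R*r))
    (fun r => L * R^3 * B (R*r)) K α hα
    (by
      intro r hr
      refine (((hvd (R*r) (by positivity)).comp r (hscale r)).const_mul L).congr_deriv ?_
      simp only [A]; field_simp; ring)
    (by
      intro r hr
      refine (((hA (R*r) (by positivity)).comp r (hscale r)).const_mul (L*R^2)).congr_deriv ?_
      ring)
    (by
      refine continuousOn_const.mul (hBc.comp (continuous_const_mul R).continuousOn ?_)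
      intro r hr
      exact mul_pos hR hr)
    (by
      intro r hr
      have h1 := hvb (R*r) (by positivity)
      rw [mul_zero, hv0, ← mul_sub, abs_mul, abs_of_pos hL0]
      have h3 : (R*r)^(1+α) * (R*r) = R^2 * R^α * (r^(1+α) * r) := by
        rw [Real.mul_rpow hR.le hr.le, hra R hR]; ring
      rw [h3] at h1
      have h4 : 0 ≤ L * (R^2 * R^α * (r^(1+α) * r)) := by positivity
      calc _ ≤ L * (R^2 * R^α * (r^(1+α) * r)) := by gcongr
        _ ≤ L * (R^2 * R^α * (r^(1+α) * r)) * (d+2) := le_mul_of_one_le_right h4 (by linarith)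
        _ = _ := by simp only [K]; ring)
    (by simp [A, hm0])
    (by
      intro r hr
      have h1 := hAb (R*r) (by positivity)
      rw [Real.mul_rpow hR.le hr.le] at h1
      rw [abs_mul, abs_of_pos (by positivity : 0 < L * R^2)]
      have h4 : 0 ≤ L * R^2 * (R^α * r^α) := by positivity
      calc _ ≤ L * R^2 * (R^α * r^α) := by gcongr
        _ ≤ L * R^2 * (R^α * r^α) * (d+2) := le_mul_of_one_le_right h4 (by linarith)
        _ = _ := by simp only [K]; ring)
    (by
      intro r hr
      have h1 := hBb (R*r) (by positivity)
      rw [Real.mul_rpow hR.le hr.le] at h1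
      rw [show r * (L * R^3 * B (R*r)) = L * R^2 * (R * r * B (R*r)) by ring, abs_mul,
        abs_of_pos (by positivity : 0 < L * R^2)]
      calc _ ≤ L * R^2 * ((d+2) * (R^α * r^α)) := by gcongr
        _ = _ := by simp only [K]; ring)
  obtain ⟨hC2, hlap⟩ := hrad
  refine ⟨fun x => L * v (R * ‖x‖), hC2.continuous.continuousOn, hC2.contDiffOn, ?_, ?_, ?_, ?_⟩
  · intro x y hxy; simp only [hxy]
  · intro x hx
    rw [mem_ball_zero_iff] at hx
    have := hvpos (R * ‖x‖) (by positivity) (by nlinarith)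
    positivity
  · intro x hx; simp [hx, hvR]
  · intro x hx
    rw [mem_ball_zero_iff] at hx
    rw [hlap x]
    by_cases hx0 : ‖x‖ = 0
    · simp [hx0, A, hm0, Real.zero_rpow hα.ne']
    have hxp : 0 < ‖x‖ := lt_of_le_of_ne (norm_nonneg _) (Ne.symm hx0)
    have hpos := hvpos (R * ‖x‖) (by positivity) (by nlinarith)
    have hFx : F (R*‖x‖) = v (R*‖x‖) ^ p := clampPow_eq p _ hpos.le (hv1 _ (by positivity))
    have h1 := hrB (R*‖x‖) (by positivity)
    rw [hFx, Real.mul_rpow hR.le hxp.le] at h1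
    rw [Real.mul_rpow hL0.le hpos.le, hLp]
    simp only [A]
    push_cast
    linear_combination (-(L * R^2)) * h1
end
end

section
/- Let N ≥ 3 and let u be a continuously differentiable function on the closed unit ball B̄ ⊂ ℝ^N that is radially symmetric (u(x) depends only on |x|) and vanishes on the boundary sphere ∂B. Then for every x ∈ B̄ with x ≠ 0, |u(x)| ≤ (∫_B |∇u(y)|² dy)^{1/2} / ( (ω_N (N-2))^{1/2} · |x|^{(N-2)/2} ), where ω_N = N · vol(B) is the surface area of the unit sphere in ℝ^N. -/
open MeasureTheory Metric Set Filter

noncomputable section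

lemma aux_cs (N : ℕ) (hN : 3 ≤ N) (D : ℝ → ℝ) (hD : ContinuousOn D (Icc 0 1)) (ρ : ℝ)
    (h0 : 0 < ρ) (h1 : ρ ≤ 1) :
    (∫ r in ρ..1, D r) ^ 2 * (((N : ℝ) - 2) * ρ ^ ((N : ℝ) - 2)) ≤
      ∫ r in Ioo (0:ℝ) 1, r ^ (N - 1) * D r ^ 2 := by
  have hN' : (3:ℝ) ≤ N := by exact_mod_cast hN
  have hDρ : ContinuousOn D (uIcc ρ 1) := by
    rw [uIcc_of_le h1]; exact hD.mono (Icc_subset_Icc h0.le le_rfl)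
  have hpos : ∀ r ∈ uIcc ρ 1, 0 < r := by
    intro r hr; rw [uIcc_of_le h1] at hr; exact h0.trans_le hr.1
  have hp : ContinuousOn (fun r : ℝ => r ^ (1 - (N:ℝ))) (uIcc ρ 1) := by
    intro r hr
    exact (Real.continuousAt_rpow_const r _ (Or.inl (hpos r hr).ne')).continuousWithinAt
  have i1 : IntervalIntegrable D volume ρ 1 := hDρ.intervalIntegrable
  have i2 : IntervalIntegrable (fun r : ℝ => r ^ (1 - (N:ℝ))) volume ρ 1 := hp.intervalIntegrable
  have i3 : IntervalIntegrable (fun r : ℝ => r ^ (N-1) * D r ^ 2) volume ρ 1 :=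
    ContinuousOn.intervalIntegrable (by fun_prop)
  set G := ∫ r in ρ..1, D r
  set A := ∫ r in ρ..1, r ^ (N-1) * D r ^ 2 with hA
  set K := ∫ r in ρ..1, r ^ (1 - (N:ℝ)) with hK
  have key : ∀ l : ℝ, 0 ≤ K * (l * l) + (-2 * G) * l + A := by
    intro l
    have e : K * (l * l) + (-2 * G) * l + A =
        ∫ r in ρ..1, ((r ^ (1 - (N:ℝ)) * (l * l) + D r * (-2 * l)) + r ^ (N-1) * D r ^ 2) := by
      rw [intervalIntegral.integral_add ((i2.mul_const _).add (i1.mul_const _)) i3,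
        intervalIntegral.integral_add (i2.mul_const _) (i1.mul_const _),
        intervalIntegral.integral_mul_const, intervalIntegral.integral_mul_const]
      ring
    rw [e]
    apply intervalIntegral.integral_nonneg h1
    intro r hr
    have hr0 : 0 < r := h0.trans_le hr.1
    have hm : r ^ (N-1) * r ^ (1 - (N:ℝ)) = 1 := by
      rw [← Real.rpow_natCast, ← Real.rpow_add hr0, Nat.cast_sub (by omega)]
      simp
    have hP : 0 < r ^ (N-1) := by positivity
    set P := r ^ (N-1)
    set Q := r ^ (1 - (N:ℝ))
    have : Q * (l * l) + D r * (-2 * l) + P * D r ^ 2 = P * (D r - l * Q) ^ 2 := by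
      linear_combination (2 * D r * l - l^2 * Q) * hm
    rw [this]; positivity
  have hd := discrim_le_zero key
  unfold discrim at hd
  have hGAK : G ^ 2 ≤ A * K := by nlinarith
  have hA0 : 0 ≤ A := by
    apply intervalIntegral.integral_nonneg h1
    intro r hr
    have hr0 : 0 < r := h0.trans_le hr.1
    positivity
  have hKv : K * (((N : ℝ) - 2) * ρ ^ ((N : ℝ) - 2)) ≤ 1 := by
    have h2 : (0:ℝ) < N - 2 := by linarith
    have e : K = (1 - ρ ^ (-((N:ℝ) - 2))) / (-((N:ℝ) - 2)) := by
      rw [hK, integral_rpow (Or.inr ⟨by linarith, fun h => (hpos 0 h).ne rfl⟩), Real.one_rpow]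
      congr 2 <;> ring_nf
    have hr : 0 < ρ ^ ((N:ℝ) - 2) := Real.rpow_pos_of_pos h0 _
    rw [e, Real.rpow_neg h0.le]
    have : (1 - (ρ ^ ((N:ℝ) - 2))⁻¹) / (-((N:ℝ) - 2)) * (((N : ℝ) - 2) * ρ ^ ((N : ℝ) - 2))
        = 1 - ρ ^ ((N:ℝ) - 2) := by
      field_simp; ring
    linarith
  have hAle : A ≤ ∫ r in Ioo (0:ℝ) 1, r ^ (N - 1) * D r ^ 2 := by
    rw [hA, intervalIntegral.integral_of_le h1, ← integral_Ioc_eq_integral_Ioo]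
    apply setIntegral_mono_set
    · apply IntegrableOn.mono_set (t := Icc 0 1) _ Ioc_subset_Icc_self
      exact ContinuousOn.integrableOn_Icc (by fun_prop)
    · filter_upwards [ae_restrict_mem measurableSet_Ioc] with r hr
      have := hr.1
      simp only [Pi.zero_apply]; positivity
    · exact (Ioc_subset_Ioc h0.le le_rfl).eventuallyLE
  have hc : 0 ≤ ((N : ℝ) - 2) * ρ ^ ((N : ℝ) - 2) := by
    have h2 : (0:ℝ) < N - 2 := by linarith
    positivity
  calc G ^ 2 * (((N : ℝ) - 2) * ρ ^ ((N : ℝ) - 2))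
      ≤ (A * K) * (((N : ℝ) - 2) * ρ ^ ((N : ℝ) - 2)) := by gcongr
    _ = A * (K * (((N : ℝ) - 2) * ρ ^ ((N : ℝ) - 2))) := by ring
    _ ≤ A * 1 := by gcongr
    _ ≤ _ := by linarith

lemma aux_polar (N : ℕ) (hN : 3 ≤ N) (F : ℝ → ℝ) :
    ∫ y in ball (0 : E N) 1, F ‖y‖ =
      ((N : ℝ) * (volume (ball (0 : E N) 1)).toReal) * ∫ r in Ioo (0:ℝ) 1, r ^ (N - 1) * F r := by
  haveI : Nonempty (Fin N) := ⟨⟨0, by omega⟩⟩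
  have h := integral_fun_norm_addHaar (volume : Measure (E N)) ((Iio (1:ℝ)).indicator F)
  have h1 : (fun y : E N => (Iio (1:ℝ)).indicator F ‖y‖) =
      (ball (0 : E N) 1).indicator (fun y => F ‖y‖) := by
    ext y; simp [indicator]
  rw [h1, integral_indicator measurableSet_ball] at h
  rw [h, finrank_euclideanSpace, Fintype.card_fin]
  have h2 : ∫ r in Ioi (0:ℝ), r ^ (N-1) • (Iio (1:ℝ)).indicator F r =
      ∫ r in Ioo (0:ℝ) 1, r ^ (N - 1) * F r := by
    have : (fun r : ℝ => r ^ (N-1) • (Iio (1:ℝ)).indicator F r) =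
      (Iio (1:ℝ)).indicator (fun r => r ^ (N-1) * F r) := by
      ext r; by_cases hr : r < 1 <;> simp [indicator, hr]
    rw [this, setIntegral_indicator measurableSet_Iio, Ioi_inter_Iio]
  rw [h2]
  simp [Measure.real, mul_assoc]

theorem stmt3 {N : ℕ} (hN : 3 ≤ N) (u : E N → ℝ)
    (hu : ContDiffOn ℝ 1 u (closedBall 0 1))
    (hrad : ∀ x y : E N, ‖x‖ = ‖y‖ → u x = u y)
    (hbd : ∀ x : E N, ‖x‖ = 1 → u x = 0)
    (x : E N) (hx : x ∈ closedBall (0 : E N) 1) (hx0 : x ≠ 0) :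
    |u x| ≤ Real.sqrt (∫ y in ball (0 : E N) 1, ‖gradient u y‖ ^ 2) /
      (Real.sqrt (((N : ℝ) * (volume (ball (0 : E N) 1)).toReal) * ((N : ℝ) - 2)) *
        ‖x‖ ^ (((N : ℝ) - 2) / 2)) := by
  have hN' : (3:ℝ) ≤ N := by exact_mod_cast hN
  have hρ : 0 < ‖x‖ := norm_pos_iff.2 hx0
  have hρ1 : ‖x‖ ≤ 1 := by simpa using hx
  set ρ := ‖x‖ with hρdef
  obtain ⟨e, he, hxe⟩ : ∃ e : E N, ‖e‖ = 1 ∧ x = ρ • e :=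
    ⟨ρ⁻¹ • x, by rw [norm_smul, norm_inv, norm_norm, inv_mul_cancel₀ hρ.ne'],
      by rw [smul_smul, mul_inv_cancel₀ hρ.ne', one_smul]⟩
  have hUD : UniqueDiffOn ℝ (closedBall (0 : E N) 1) :=
    uniqueDiffOn_convex (convex_closedBall 0 1) ⟨0, by
      rw [interior_closedBall _ one_ne_zero]; simp⟩
  have hc : ContinuousOn (fderivWithin ℝ u (closedBall 0 1)) (closedBall 0 1) :=
    hu.continuousOn_fderivWithin hUD le_rfl
  set D : ℝ → ℝ := fun t => fderivWithin ℝ u (closedBall 0 1) (t • e) e with hDdef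
  have hmaps : MapsTo (fun t : ℝ => t • e) (Icc 0 1) (closedBall 0 1) := by
    intro t ht; simp [norm_smul, he, abs_of_nonneg ht.1, ht.2]
  have hD : ContinuousOn D (Icc 0 1) :=
    (hc.comp (by fun_prop) hmaps).clm_apply continuousOn_const
  have hfd : ∀ y ∈ ball (0 : E N) 1, fderivWithin ℝ u (closedBall 0 1) y = fderiv ℝ u y := by
    intro y hy
    exact fderivWithin_of_mem_nhds (Filter.mem_of_superset (isOpen_ball.mem_nhds hy) ball_subset_closedBall)
  have hdiff : ∀ y ∈ ball (0 : E N) 1, DifferentiableAt ℝ u y := by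
    intro y hy
    exact (hu.differentiableOn one_ne_zero).differentiableAt
      (Filter.mem_of_superset (isOpen_ball.mem_nhds hy) ball_subset_closedBall)
  have hder : ∀ f : E N, ‖f‖ = 1 → ∀ t : ℝ, |t| < 1 →
      HasDerivAt (fun s : ℝ => u (s • f)) (fderiv ℝ u (t • f) f) t := by
    intro f hf t ht
    have hb : t • f ∈ ball (0 : E N) 1 := by simpa [norm_smul, hf] using ht
    have h1 : HasDerivAt (fun s : ℝ => s • f) f t := by
      simpa using (hasDerivAt_id t).smul_const f
    exact (hdiff _ hb).hasFDerivAt.comp_hasDerivAt t h1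
  have hDf : ∀ t : ℝ, |t| < 1 → D t = fderiv ℝ u (t • e) e := by
    intro t ht
    rw [hDdef]; simp only
    rw [hfd]; simpa [norm_smul, he] using ht
  -- pointwise bound
  have hpt : ∀ y ∈ ball (0 : E N) 1, D ‖y‖ ^ 2 ≤ ‖gradient u y‖ ^ 2 := by
    intro y hy
    have hy1 : |‖y‖| < 1 := by simpa using hy
    obtain ⟨f, hf, hyf⟩ : ∃ f : E N, ‖f‖ = 1 ∧ y = ‖y‖ • f := by
      by_cases h : y = 0
      · exact ⟨e, he, by simp [h]⟩
      · have h' : ‖y‖ ≠ 0 := norm_ne_zero_iff.2 h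
        exact ⟨‖y‖⁻¹ • y, by rw [norm_smul, norm_inv, norm_norm, inv_mul_cancel₀ h'],
          by rw [smul_smul, mul_inv_cancel₀ h', one_smul]⟩
    have h1 := hder e he ‖y‖ hy1
    have h2 := hder f hf ‖y‖ hy1
    have : (fun s : ℝ => u (s • e)) = fun s : ℝ => u (s • f) := by
      ext s; apply hrad; simp [norm_smul, he, hf]
    rw [this] at h1
    have h3 : D ‖y‖ = fderiv ℝ u y f := by
      rw [hDf _ hy1, h1.unique h2, ← hyf]
    have h4 : ‖gradient u y‖ = ‖fderiv ℝ u y‖ := by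
      simp [gradient]
    rw [h3, h4, ← sq_abs, ← Real.norm_eq_abs]
    gcongr
    simpa [hf] using (fderiv ℝ u y).le_opNorm f
  have hint : ∫ y in ball (0 : E N) 1, D ‖y‖ ^ 2 ≤ ∫ y in ball (0 : E N) 1, ‖gradient u y‖ ^ 2 := by
    apply setIntegral_mono_on _ _ measurableSet_ball hpt
    · apply IntegrableOn.mono_set (t := closedBall 0 1) _ ball_subset_closedBall
      apply ContinuousOn.integrableOn_compact (isCompact_closedBall _ _)
      exact (hD.comp continuous_norm.continuousOn (fun y hy => ⟨norm_nonneg _, by simpa using hy⟩)).pow 2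
    · have : IntegrableOn (fun y => ‖fderivWithin ℝ u (closedBall 0 1) y‖ ^ 2) (ball (0 : E N) 1) := by
        apply IntegrableOn.mono_set (t := closedBall 0 1) _ ball_subset_closedBall
        exact ContinuousOn.integrableOn_compact (isCompact_closedBall _ _) (hc.norm.pow 2)
      refine this.congr_fun (fun y hy => ?_) measurableSet_ball
      simp [gradient, hfd y hy]
  have hftc : ∫ r in ρ..1, D r = - u x := by
    have h := intervalIntegral.integral_eq_sub_of_hasDerivAt_of_le (f := fun s : ℝ => u (s • e))
      (f' := D) hρ1
      (hu.continuousOn.comp (by fun_prop) (hmaps.mono_left (Icc_subset_Icc hρ.le le_rfl)))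
      (fun t ht => by
        have ht' : |t| < 1 := by rw [abs_of_pos (hρ.trans ht.1)]; exact ht.2
        rw [hDf t ht']; exact hder e he t ht')
      (ContinuousOn.intervalIntegrable (by
        rw [uIcc_of_le hρ1]; exact hD.mono (Icc_subset_Icc hρ.le le_rfl)))
    rw [h, ← hxe, hbd _ (by simp [he])]; ring
  have hcs := aux_cs N hN D hD ρ hρ hρ1
  rw [hftc] at hcs
  rw [aux_polar N hN (fun r => D r ^ 2)] at hint
  haveI : Nonempty (Fin N) := ⟨⟨0, by omega⟩⟩
  have hvol : 0 < (volume (ball (0 : E N) 1)).toReal :=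
    ENNReal.toReal_pos (measure_ball_pos _ _ one_pos).ne' measure_ball_lt_top.ne
  have h2 : (0:ℝ) < N - 2 := by linarith
  have hω : 0 < (N : ℝ) * (volume (ball (0 : E N) 1)).toReal := by
    have : (0:ℝ) < N := by linarith
    positivity
  set ω := (N : ℝ) * (volume (ball (0 : E N) 1)).toReal
  rw [le_div_iff₀ (by positivity)]
  apply Real.le_sqrt_of_sq_le
  refine le_trans ?_ hint
  have hsq : (ρ ^ (((N : ℝ) - 2) / 2)) ^ 2 = ρ ^ ((N : ℝ) - 2) := by
    rw [← Real.rpow_natCast, ← Real.rpow_mul hρ.le]; congr 1; push_cast; ring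
  rw [mul_pow, mul_pow, hsq, sq_abs, Real.sq_sqrt (by positivity)]
  calc u x ^ 2 * (ω * ((N:ℝ) - 2) * ρ ^ ((N : ℝ) - 2))
      = ω * ((- u x) ^ 2 * (((N:ℝ) - 2) * ρ ^ ((N : ℝ) - 2))) := by ring
    _ ≤ _ := by gcongr
end
end

section
/- Let N ≥ 2 and p > 1, and if N ≥ 3 assume additionally p + 1 < 2N/(N-2). Then there exists α* > 0 such that for every α > α*, no minimizer of the Rayleigh quotient R_{α,p} over the class 𝒞 is radial; that is, every u ∈ 𝒞 with R_{α,p}(u) = S_{α,p} satisfies u(x) ≠ u(y) for some x, y ∈ B with |x| = |y|. -/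
open MeasureTheory Metric Set Filter

noncomputable section

/-- The admissible class 𝒞: C¹ functions on the closed unit ball, vanishing on the
boundary sphere, not identically zero. -/
def memC {N : ℕ} (u : E N → ℝ) : Prop :=
  ContDiffOn ℝ 1 u (closedBall 0 1) ∧
  (∀ x : E N, ‖x‖ = 1 → u x = 0) ∧
  ∃ x ∈ closedBall (0 : E N) 1, u x ≠ 0

/-- The Rayleigh quotient R_{α,p}. -/
def ray {N : ℕ} (α p : ℝ) (u : E N → ℝ) : ℝ :=
  (∫ x in ball (0 : E N) 1, ‖gradient u x‖ ^ 2) /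
    (∫ x in ball (0 : E N) 1, ‖x‖ ^ α * |u x| ^ (p + 1)) ^ (2 / (p + 1))

/-- The ground-state level S_{α,p}. -/
def Sval (N : ℕ) (α p : ℝ) : ℝ := sInf {c | ∃ u : E N → ℝ, memC u ∧ ray α p u = c}

/-- A function is radial if its value depends only on the norm. -/
def radial {N : ℕ} (u : E N → ℝ) : Prop := ∀ x y : E N, ‖x‖ = ‖y‖ → u x = u y

/-- The radial ground-state level S^rad_{α,p}. -/
def SradVal (N : ℕ) (α p : ℝ) : ℝ :=
  sInf {c | ∃ u : E N → ℝ, memC u ∧ radial u ∧ ray α p u = c}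

open scoped Topology

lemma beta_bound (γ q : ℝ) (hγ : 0 < γ) (hq : 0 < q) :
    ∫ y in Ioo (0:ℝ) 1, y ^ γ * (1 - y) ^ q ≤ (1 / γ) ^ (q + 1) * Real.Gamma (q + 1) := by
  have h1 : ∫ y in Ioo (0:ℝ) 1, y ^ γ * (1 - y) ^ q
      = ∫ y in Ioo (0:ℝ) 1, (1 - y) ^ γ * y ^ q := by
    rw [← integral_Ioc_eq_integral_Ioo, ← integral_Ioc_eq_integral_Ioo,
      ← intervalIntegral.integral_of_le zero_le_one, ← intervalIntegral.integral_of_le zero_le_one]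
    have := intervalIntegral.integral_comp_sub_left (a := 0) (b := 1)
      (fun y : ℝ => (1 - y) ^ γ * y ^ q) 1
    simpa using this
  have hi : IntegrableOn (fun t : ℝ => t ^ (q + 1 - 1) * Real.exp (-(γ * t))) (Ioi 0) := by
    have := integrableOn_rpow_mul_exp_neg_mul_rpow (p := 1) (s := q) (b := γ) (by linarith)
      one_pos hγ
    simpa using this
  rw [h1, ← Real.integral_rpow_mul_exp_neg_mul_Ioi (a := q + 1) (by linarith) hγ]
  calc ∫ y in Ioo (0:ℝ) 1, (1 - y) ^ γ * y ^ q
      ≤ ∫ y in Ioo (0:ℝ) 1, y ^ (q + 1 - 1) * Real.exp (-(γ * y)) := by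
        apply integral_mono_of_nonneg
        · filter_upwards [ae_restrict_mem measurableSet_Ioo] with y hy
          have h1 : 0 ≤ 1 - y := by linarith [hy.2]
          have h2 : 0 ≤ y := hy.1.le
          show 0 ≤ (1 - y) ^ γ * y ^ q
          positivity
        · exact hi.mono_set Ioo_subset_Ioi_self
        · filter_upwards [ae_restrict_mem measurableSet_Ioo] with y hy
          have h1 : 0 ≤ 1 - y := by linarith [hy.2]
          have h2 : 0 ≤ y := hy.1.le
          have h3 : (1 - y) ^ γ ≤ Real.exp (-(γ * y)) := by
            have : 1 - y ≤ Real.exp (-y) := Real.one_sub_le_exp_neg y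
            calc (1 - y) ^ γ ≤ (Real.exp (-y)) ^ γ := Real.rpow_le_rpow h1 this hγ.le
              _ = _ := by rw [← Real.exp_mul]; congr 1; ring
          rw [mul_comm, add_sub_cancel_right]
          gcongr
    _ ≤ _ := by
        apply setIntegral_mono_set hi
        · filter_upwards [ae_restrict_mem measurableSet_Ioi] with y hy
          have h2 : 0 < y := hy
          show 0 ≤ _
          positivity
        · exact Ioo_subset_Ioi_self.eventuallyLE

lemma polar_ball {N : ℕ} (hN : 2 ≤ N) (f : ℝ → ℝ) :
    ∫ x in ball (0 : E N) 1, f ‖x‖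
      = (N * (volume : Measure (E N)).real (ball 0 1)) *
        ∫ y in Ioo (0:ℝ) 1, y ^ (N - 1) * f y := by
  have : Nonempty (Fin N) := ⟨⟨0, by omega⟩⟩
  have h := integral_fun_norm_addHaar (volume : Measure (E N)) ((Iio (1:ℝ)).indicator f)
  have h1 : (fun x : E N => (Iio (1:ℝ)).indicator f ‖x‖)
      = (ball (0 : E N) 1).indicator (fun x => f ‖x‖) := by
    ext x
    by_cases hx : ‖x‖ < 1 <;> simp [indicator, hx]
  rw [h1, integral_indicator measurableSet_ball] at h
  rw [h]
  have h2 : (fun y : ℝ => y ^ (Module.finrank ℝ (E N) - 1) • (Iio (1:ℝ)).indicator f y)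
      = (Iio (1:ℝ)).indicator (fun y => y ^ (N - 1) * f y) := by
    ext y
    by_cases hx : y < 1 <;> simp [indicator, hx]
  rw [h2, setIntegral_indicator measurableSet_Iio, Ioi_inter_Iio]
  simp [mul_assoc]

lemma oneD (n : ℕ) (g h : ℝ → ℝ) (hg : ContinuousOn g (Icc 0 1)) (hh : ContinuousOn h (Icc 0 1))
    (hd : ∀ t ∈ Ioo (0:ℝ) 1, HasDerivAt g (h t) t) (h1 : g 1 = 0) (r : ℝ) (hr : r ∈ Ioo (0:ℝ) 1) :
    r ^ n * g r ^ 2 ≤ (1 - r) * ∫ s in Ioo (0:ℝ) 1, s ^ n * h s ^ 2 := by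
  have hr1 : r ≤ 1 := hr.2.le
  have hsub : Icc r 1 ⊆ Icc (0:ℝ) 1 := Icc_subset_Icc_left hr.1.le
  have hi : IntervalIntegrable h volume r 1 := (hh.mono hsub).intervalIntegrable_of_Icc hr1
  have hi2 : IntervalIntegrable (fun s => h s ^ 2) volume r 1 :=
    ((hh.mono hsub).pow 2).intervalIntegrable_of_Icc hr1
  have ftc : ∫ y in r..1, h y = g 1 - g r :=
    intervalIntegral.integral_eq_sub_of_hasDerivAt_of_le hr1 (hg.mono hsub)
      (fun x hx => hd x ⟨hr.1.trans hx.1, hx.2⟩) hi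
  set A := ∫ s in r..1, h s ^ 2 with hA
  have hcs : g r ^ 2 ≤ (1 - r) * A := by
    have h0 : 0 ≤ ∫ s in r..1, (h s - (-(g r) / (1 - r))) ^ 2 :=
      intervalIntegral.integral_nonneg hr1 (fun s _ => sq_nonneg _)
    have h2 : ∫ s in r..1, (h s - (-(g r) / (1 - r))) ^ 2
        = A + 2 * (g r / (1 - r)) * (∫ s in r..1, h s) + (1 - r) * (g r / (1 - r)) ^ 2 := by
      have : (fun s => (h s - (-(g r) / (1 - r))) ^ 2)
          = fun s => h s ^ 2 + 2 * (g r / (1 - r)) * h s + (g r / (1 - r)) ^ 2 := by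
        ext s; ring
      rw [this, intervalIntegral.integral_add (hi2.add (hi.const_mul _)) (by simp),
        intervalIntegral.integral_add hi2 (hi.const_mul _), intervalIntegral.integral_const_mul]
      simp [hA]
    rw [h2, ftc, h1] at h0
    have hpos : 0 < 1 - r := by linarith [hr.2]
    have h3 : A + 2 * (g r / (1 - r)) * (0 - g r) + (1 - r) * (g r / (1 - r)) ^ 2
        = A - g r ^ 2 / (1 - r) := by field_simp; ring
    rw [h3] at h0
    have : g r ^ 2 / (1 - r) ≤ A := by linarith
    rw [div_le_iff₀ hpos] at this
    linarith
  have hA2 : r ^ n * A ≤ ∫ s in Ioo (0:ℝ) 1, s ^ n * h s ^ 2 := by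
    have hcont : ContinuousOn (fun s : ℝ => s ^ n * h s ^ 2) (Icc 0 1) :=
      (continuousOn_id.pow n).mul (hh.pow 2)
    have hint : IntegrableOn (fun s : ℝ => s ^ n * h s ^ 2) (Ioo 0 1) :=
      (hcont.integrableOn_compact isCompact_Icc).mono_set Ioo_subset_Icc_self
    rw [hA, intervalIntegral.integral_of_le hr1, integral_Ioc_eq_integral_Ioo,
      ← integral_const_mul]
    calc _ ≤ ∫ s in Ioo r 1, s ^ n * h s ^ 2 := by
          apply integral_mono_of_nonneg
          · filter_upwards with s
            have := hr.1.le
            show 0 ≤ _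
            positivity
          · exact hint.mono_set (Ioo_subset_Ioo_left hr.1.le)
          · filter_upwards [ae_restrict_mem measurableSet_Ioo] with s hs
            have := hr.1.le
            have := hs.1.le
            gcongr
      _ ≤ _ := by
          apply setIntegral_mono_set hint
          · filter_upwards [ae_restrict_mem measurableSet_Ioo] with s hs
            have := hs.1.le
            show 0 ≤ _
            positivity
          · exact (Ioo_subset_Ioo_left hr.1.le).eventuallyLE
  have hpos : 0 < 1 - r := by linarith [hr.2]
  have : 0 ≤ r ^ n := pow_nonneg hr.1.le n
  calc r ^ n * g r ^ 2 ≤ r ^ n * ((1 - r) * A) := by gcongr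
    _ = (1 - r) * (r ^ n * A) := by ring
    _ ≤ _ := by gcongr
lemma norm_gradient {N : ℕ} (u : E N → ℝ) (x : E N) : ‖gradient u x‖ = ‖fderiv ℝ u x‖ := by
  simp [gradient]

lemma den_pos {N : ℕ} (hN : 2 ≤ N) (α p : ℝ) (hα : 0 < α) (hp : 1 < p) (u : E N → ℝ)
    (hu : memC u) :
    0 < ∫ x in ball (0 : E N) 1, ‖x‖ ^ α * |u x| ^ (p + 1) := by
  have : Nonempty (Fin N) := ⟨⟨0, by omega⟩⟩
  obtain ⟨h1, h2, x0, hx0, hne⟩ := hu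
  have hc : ContinuousOn (fun x : E N => ‖x‖ ^ α * |u x| ^ (p + 1)) (closedBall 0 1) := by
    apply ContinuousOn.mul
    · exact (continuous_norm.continuousOn).rpow_const (fun x _ => Or.inr hα.le)
    · exact (h1.continuousOn.abs).rpow_const (fun x _ => Or.inr (by linarith))
  have hint : IntegrableOn (fun x : E N => ‖x‖ ^ α * |u x| ^ (p + 1)) (ball 0 1) :=
    (hc.integrableOn_compact (isCompact_closedBall _ _)).mono_set ball_subset_closedBall
  have hnn : ∀ x : E N, 0 ≤ ‖x‖ ^ α * |u x| ^ (p + 1) := fun x => by positivity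
  rcases (integral_nonneg (μ := volume.restrict (ball (0 : E N) 1)) (Pi.le_def.2 hnn)).lt_or_eq with h | h
  · exact h
  exfalso
  rw [eq_comm, integral_eq_zero_iff_of_nonneg (Pi.le_def.2 hnn) hint] at h
  have hae : u =ᵐ[volume.restrict (ball (0 : E N) 1)] (fun _ => 0) := by
    have h0 : ∀ᵐ x ∂(volume.restrict (ball (0 : E N) 1)), x ≠ 0 :=
      ae_restrict_of_ae (by simp [ae_iff])
    filter_upwards [h, h0] with x hx hx0
    simp only [Pi.zero_apply, mul_eq_zero] at hx
    rcases hx with hx | hx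
    · exact absurd hx (Real.rpow_pos_of_pos (norm_pos_iff.2 hx0) _).ne'
    · rw [Real.rpow_eq_zero (abs_nonneg _) (by linarith)] at hx
      exact abs_eq_zero.1 hx
  have := Measure.eqOn_open_of_ae_eq hae isOpen_ball
    (h1.continuousOn.mono ball_subset_closedBall) continuousOn_const
  have hx1 : ‖x0‖ ≤ 1 := by simpa using hx0
  rcases hx1.lt_or_eq with hl | he
  · exact hne (this (by simpa using hl))
  · exact hne (h2 x0 he)

lemma lower {N : ℕ} (hN : 2 ≤ N) (α q : ℝ) (hα : (N - 1 : ℝ) * q < α) (hq : 1 < q)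
    (u : E N → ℝ) (hu : memC u)
    (hrad : ∀ x y : E N, x ∈ ball (0 : E N) 1 → y ∈ ball (0 : E N) 1 → ‖x‖ = ‖y‖ → u x = u y)
    (c : ℝ) (hcdef : c = N * (volume : Measure (E N)).real (ball 0 1)) (hcpos : 0 < c) :
    ∫ x in ball (0 : E N) 1, ‖x‖ ^ α * |u x| ^ (2 * q)
      ≤ c * (((∫ x in ball (0 : E N) 1, ‖gradient u x‖ ^ 2) / c) ^ q *
        ((1 / (α - (N - 1) * q)) ^ (q + 1) * Real.Gamma (q + 1))) := by
  obtain ⟨h1, h2, -⟩ := hu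
  have hN1 : (1:ℝ) ≤ N := by exact_mod_cast (by omega : 1 ≤ N)
  set e : E N := EuclideanSpace.single ⟨0, by omega⟩ 1 with he
  have hen : ‖e‖ = 1 := by simp [he]
  have huniq : UniqueDiffOn ℝ (closedBall (0 : E N) 1) :=
    uniqueDiffOn_convex (convex_closedBall _ _)
      ⟨0, by rw [interior_closedBall _ one_ne_zero]; simp⟩
  have hfc : ContinuousOn (fderivWithin ℝ u (closedBall (0 : E N) 1)) (closedBall 0 1) :=
    h1.continuousOn_fderivWithin huniq le_rfl
  have hnh : ∀ x ∈ ball (0 : E N) 1, closedBall (0 : E N) 1 ∈ 𝓝 x := fun x hx =>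
    mem_of_superset (isOpen_ball.mem_nhds hx) ball_subset_closedBall
  have hfe : ∀ x ∈ ball (0 : E N) 1,
      fderivWithin ℝ u (closedBall (0 : E N) 1) x = fderiv ℝ u x := fun x hx =>
    fderivWithin_of_mem_nhds (hnh x hx)
  have hdiff : ∀ x ∈ ball (0 : E N) 1, DifferentiableAt ℝ u x := fun x hx =>
    ((h1.differentiableOn one_ne_zero) x (ball_subset_closedBall hx)).differentiableAt (hnh x hx)
  have hmap : MapsTo (fun t : ℝ => t • e) (Icc 0 1) (closedBall (0 : E N) 1) := by
    intro t ht
    simp [norm_smul, hen, abs_of_nonneg ht.1, ht.2]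
  have hcont : ContinuousOn (fun t : ℝ => t • e) (Icc 0 1) := by fun_prop
  set g : ℝ → ℝ := fun t => u (t • e) with hg
  set h : ℝ → ℝ := fun t => fderivWithin ℝ u (closedBall (0 : E N) 1) (t • e) e with hh
  have hgc : ContinuousOn g (Icc 0 1) := h1.continuousOn.comp hcont hmap
  have hhc : ContinuousOn h (Icc 0 1) := (hfc.comp hcont hmap).clm_apply continuousOn_const
  have hdl : ∀ (w : E N), ‖w‖ = 1 → ∀ t ∈ Ico (0:ℝ) 1,
      HasDerivAt (fun t : ℝ => u (t • w)) (fderiv ℝ u (t • w) w) t := by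
    intro w hw t ht
    have hb : t • w ∈ ball (0 : E N) 1 := by
      simp [norm_smul, hw, abs_of_nonneg ht.1, ht.2]
    have := (hdiff _ hb).hasFDerivAt.comp_hasDerivAt t ((hasDerivAt_id t).smul_const w)
    rw [one_smul] at this
    exact this
  have heb : ∀ t ∈ Ico (0:ℝ) 1, t • e ∈ ball (0 : E N) 1 := fun t ht => by
    simp [norm_smul, hen, abs_of_nonneg ht.1, ht.2]
  have hgd : ∀ t ∈ Ioo (0:ℝ) 1, HasDerivAt g (h t) t := by
    intro t ht
    have := hdl e hen t ⟨ht.1.le, ht.2⟩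
    simp only [hh]
    rw [hfe _ (heb t ⟨ht.1.le, ht.2⟩)]
    exact this
  have hg1 : g 1 = 0 := by simp only [hg, one_smul]; exact h2 e hen
  -- u is g of norm
  have hug : ∀ x ∈ ball (0 : E N) 1, u x = g ‖x‖ := by
    intro x hx
    have hx1 : ‖x‖ < 1 := by simpa using hx
    exact hrad x _ hx (heb _ ⟨norm_nonneg _, hx1⟩) (by simp [norm_smul, hen])
  have hgrad : ∀ x ∈ ball (0 : E N) 1, |h ‖x‖| ≤ ‖gradient u x‖ := by
    intro x hx
    have hx1 : ‖x‖ < 1 := by simpa using hx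
    rw [norm_gradient]
    rcases eq_or_ne x 0 with rfl | hx0
    · simp only [hh, norm_zero, zero_smul]
      rw [hfe _ (by simp)]
      have := (fderiv ℝ u 0).le_opNorm e
      rwa [hen, mul_one] at this
    · have hxp : 0 < ‖x‖ := norm_pos_iff.2 hx0
      set w : E N := ‖x‖⁻¹ • x with hw
      have hwn : ‖w‖ = 1 := by
        rw [hw, norm_smul, norm_inv, norm_norm, inv_mul_cancel₀ hxp.ne']
      have hxw : ‖x‖ • w = x := by
        rw [hw, smul_smul, mul_inv_cancel₀ hxp.ne', one_smul]
      have hd1 := hdl w hwn ‖x‖ ⟨hxp.le, hx1⟩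
      rw [hxw] at hd1
      have hev : g =ᶠ[𝓝 ‖x‖] (fun t : ℝ => u (t • w)) := by
        filter_upwards [isOpen_Ioo.mem_nhds (⟨hxp, hx1⟩ : ‖x‖ ∈ Ioo (0:ℝ) 1)] with t ht
        apply hrad _ _ (heb t ⟨ht.1.le, ht.2⟩)
        · simp [norm_smul, hwn, abs_of_nonneg ht.1.le, ht.2]
        · simp [norm_smul, hwn, hen]
      have hd2 := hgd ‖x‖ ⟨hxp, hx1⟩
      have heq := hd2.unique (hd1.congr_of_eventuallyEq hev)
      rw [heq]
      have := (fderiv ℝ u x).le_opNorm w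
      rwa [hwn, mul_one] at this
  -- numerator
  set D := ∫ s in Ioo (0:ℝ) 1, s ^ (N - 1) * h s ^ 2 with hD
  have hD0 : 0 ≤ D := by
    apply setIntegral_nonneg measurableSet_Ioo
    intro s hs
    have := hs.1.le
    positivity
  have hnum : c * D ≤ ∫ x in ball (0 : E N) 1, ‖gradient u x‖ ^ 2 := by
    rw [hcdef, hD, ← polar_ball hN (fun s => h s ^ 2)]
    apply integral_mono_of_nonneg
    · filter_upwards with x
      show 0 ≤ _
      positivity
    · have : IntegrableOn (fun x => ‖fderivWithin ℝ u (closedBall (0 : E N) 1) x‖ ^ 2)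
          (ball (0 : E N) 1) :=
        ((hfc.norm.pow 2).integrableOn_compact (isCompact_closedBall _ _)).mono_set
          ball_subset_closedBall
      apply this.congr_fun _ measurableSet_ball
      intro x hx
      simp only [norm_gradient, hfe x hx]
    · filter_upwards [ae_restrict_mem measurableSet_ball] with x hx
      rw [← sq_abs]
      have := hgrad x hx
      gcongr
  set γ := α - (N - 1) * q with hγ
  have hγ0 : 0 < γ := by linarith
  have hpt : ∀ r ∈ Ioo (0:ℝ) 1, r ^ α * |g r| ^ (2 * q) ≤ D ^ q * (r ^ γ * (1 - r) ^ q) := by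
    intro r hr
    have h0 := oneD (N - 1) g h hgc hhc hgd hg1 r hr
    have hr0 := hr.1
    have hr1 : 0 ≤ 1 - r := by linarith [hr.2]
    have e1 : |g r| ^ (2 * q) = (g r ^ 2) ^ q := by
      rw [Real.rpow_mul (abs_nonneg _)]
      congr 1
      rw [Real.rpow_two, sq_abs]
    have e2 : r ^ α = r ^ γ * (r ^ (N - 1)) ^ q := by
      rw [← Real.rpow_natCast, ← Real.rpow_mul hr0.le, ← Real.rpow_add hr0]
      congr 1
      rw [Nat.cast_sub (by omega)]
      push_cast
      rw [hγ]; ring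
    rw [e1, e2, mul_assoc, ← Real.mul_rpow (by positivity) (by positivity)]
    calc r ^ γ * (r ^ (N - 1) * g r ^ 2) ^ q ≤ r ^ γ * ((1 - r) * D) ^ q := by
          gcongr
      _ = _ := by rw [Real.mul_rpow hr1 hD0]; ring
  have hden : ∫ x in ball (0 : E N) 1, ‖x‖ ^ α * |u x| ^ (2 * q)
      = c * ∫ y in Ioo (0:ℝ) 1, y ^ (N - 1) * (y ^ α * |g y| ^ (2 * q)) := by
    rw [hcdef, ← polar_ball hN (fun y => y ^ α * |g y| ^ (2 * q))]
    apply setIntegral_congr_fun measurableSet_ball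
    intro x hx
    simp only [hug x hx]
  rw [hden]
  apply mul_le_mul_of_nonneg_left _ hcpos.le
  have hcont2 : ContinuousOn (fun y : ℝ => D ^ q * (y ^ γ * (1 - y) ^ q)) (Icc 0 1) := by
    apply continuousOn_const.mul
    apply ContinuousOn.mul
    · exact continuousOn_id.rpow_const (fun x _ => Or.inr hγ0.le)
    · exact (continuousOn_const.sub continuousOn_id).rpow_const
        (fun x _ => Or.inr (by linarith))
  calc _ ≤ ∫ y in Ioo (0:ℝ) 1, D ^ q * (y ^ γ * (1 - y) ^ q) := by
        apply integral_mono_of_nonneg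
        · filter_upwards [ae_restrict_mem measurableSet_Ioo] with y hy
          have := hy.1.le
          show 0 ≤ _
          positivity
        · exact (hcont2.integrableOn_compact isCompact_Icc).mono_set Ioo_subset_Icc_self
        · filter_upwards [ae_restrict_mem measurableSet_Ioo] with y hy
          have h3 := hy.1.le
          have h4 := hpt y hy
          have h5 : y ^ (N - 1) ≤ 1 := pow_le_one₀ h3 hy.2.le
          have h6 : 0 ≤ y ^ α * |g y| ^ (2 * q) := by positivity
          exact (mul_le_of_le_one_left h6 h5).trans h4
    _ = D ^ q * ∫ y in Ioo (0:ℝ) 1, (y ^ γ * (1 - y) ^ q) := integral_const_mul _ _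
    _ ≤ _ := by
        have hDn : D ≤ (∫ x in ball (0 : E N) 1, ‖gradient u x‖ ^ 2) / c := by
          rw [le_div_iff₀ hcpos, mul_comm]; exact hnum
        have hb := beta_bound γ q hγ0 (by linarith)
        have : 0 ≤ ∫ y in Ioo (0:ℝ) 1, (y ^ γ * (1 - y) ^ q) := by
          apply setIntegral_nonneg measurableSet_Ioo
          intro s hs
          have := hs.1.le
          have : 0 ≤ 1 - s := by linarith [hs.2]
          positivity
        have hq0 : 0 ≤ q := by linarith
        have h7 := Real.rpow_le_rpow hD0 hDn hq0
        exact mul_le_mul h7 hb this ((Real.rpow_nonneg hD0 _).trans h7)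
lemma exists_bump (N : ℕ) : ∃ φ : E N → ℝ, ContDiff ℝ 1 φ ∧ HasCompactSupport φ ∧
    (∀ x : E N, 1 ≤ ‖x‖ → φ x = 0) ∧ φ 0 = 1 := by
  let φ : ContDiffBump (0 : E N) := ⟨1/2, 1, by norm_num, by norm_num⟩
  exact ⟨φ, φ.contDiff, φ.hasCompactSupport,
    fun x hx => φ.zero_of_le_dist (by simpa [φ] using hx),
    φ.one_of_mem_closedBall (by simp [φ])⟩

lemma upper {N : ℕ} (hN : 2 ≤ N) (q : ℝ) (hq : 1 < q) :
    ∃ P Q : ℝ, 0 < Q ∧ 0 ≤ P ∧ ∀ α : ℝ, 4 < α → Sval N α (2 * q - 1) ≤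
      (α ^ 2 * ((α ^ N)⁻¹ * P)) / ((α ^ N)⁻¹ * Q) ^ (1 / q) := by
  set e : E N := EuclideanSpace.single ⟨0, by omega⟩ 1 with he
  have hen : ‖e‖ = 1 := by simp [he]
  have : Nonempty (Fin N) := ⟨⟨0, by omega⟩⟩
  obtain ⟨φ, hφd, hφcs, hφ0, hφ1⟩ := exists_bump N
  have hφc : Continuous φ := hφd.continuous
  have hdc : Continuous (fderiv ℝ φ) := hφd.continuous_fderiv one_ne_zero
  have hi1 : Integrable (fun x : E N => ‖fderiv ℝ φ x‖ ^ 2) := by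
    have h1 : HasCompactSupport (fderiv ℝ φ) := hφcs.fderiv ℝ
    have h2 : HasCompactSupport (fun x : E N => ‖fderiv ℝ φ x‖) := h1.norm
    have h3 : HasCompactSupport (fun x : E N => ‖fderiv ℝ φ x‖ ^ 2) :=
      h2.comp_left (g := fun y : ℝ => y ^ 2) (by simp)
    have h4 : Continuous (fun x : E N => ‖fderiv ℝ φ x‖ ^ 2) := hdc.norm.pow 2
    exact h4.integrable_of_hasCompactSupport h3
  have hi2 : Integrable (fun x : E N => |φ x| ^ (2 * q)) := by
    apply (hφc.abs.rpow_const (fun x => Or.inr (by linarith))).integrable_of_hasCompactSupport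
    exact hφcs.comp_left (g := fun y => |y| ^ (2 * q))
      (by simp [Real.zero_rpow (by linarith : 2 * q ≠ 0)])
  have hQ : 0 < ∫ x : E N, |φ x| ^ (2 * q) := by
    apply (hφc.abs.rpow_const (fun x => Or.inr (by linarith))).integral_pos_of_hasCompactSupport_nonneg_nonzero
      (x := 0)
    · exact hφcs.comp_left (g := fun y => |y| ^ (2 * q))
        (by simp [Real.zero_rpow (by linarith : 2 * q ≠ 0)])
    · intro x; show 0 ≤ |φ x| ^ (2 * q); positivity
    · simp [hφ1]
  refine ⟨∫ x : E N, ‖fderiv ℝ φ x‖ ^ 2, Real.exp (-4) * ∫ x : E N, |φ x| ^ (2 * q), by positivity,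
    integral_nonneg (fun x => by positivity), ?_⟩
  intro α hα
  have hα0 : 0 < α := by linarith
  set z : E N := (1 - 1 / α) • e with hz
  have hα4 : 1 / α < 1 / 4 := one_div_lt_one_div_of_lt (by norm_num) hα
  have hαp : 0 < 1 / α := by positivity
  have hzn : ‖z‖ = 1 - 1 / α := by
    rw [hz, norm_smul, hen, mul_one, Real.norm_eq_abs, abs_of_nonneg (by linarith)]
  set u : E N → ℝ := fun x => φ (α • (x - z)) with hu
  have hsupp : ∀ x : E N, u x ≠ 0 → ‖x - z‖ < 1 / α := by
    intro x hx
    by_contra hcon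
    push Not at hcon
    apply hx
    apply hφ0
    rw [norm_smul, Real.norm_eq_abs, abs_of_pos hα0]
    rw [div_le_iff₀ hα0] at hcon
    linarith
  have hin : ∀ x : E N, u x ≠ 0 → ‖x‖ < 1 ∧ 1 - 2 / α ≤ ‖x‖ := by
    intro x hx
    have h1 := hsupp x hx
    have h2 : ‖x‖ ≤ ‖x - z‖ + ‖z‖ := by simpa using norm_add_le (x - z) z
    have h3 : ‖z‖ ≤ ‖x - z‖ + ‖x‖ := by
      have := norm_sub_le x (x - z)
      simp only [sub_sub_cancel] at this
      linarith
    have h4 : 2 / α = 1 / α + 1 / α := by ring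
    constructor <;> linarith
  have huc : ContDiff ℝ 1 u :=
    hφd.comp ((contDiff_id.sub contDiff_const).const_smul α)
  have hmem : memC u := by
    refine ⟨huc.contDiffOn, ?_, z, ?_, ?_⟩
    · intro x hx
      by_contra hcon
      linarith [(hin x hcon).1]
    · simp only [mem_closedBall, dist_zero_right, hzn]; linarith
    · simp [hu, hφ1]
  have hle : Sval N α (2 * q - 1) ≤ ray α (2 * q - 1) u := by
    apply csInf_le
    · refine ⟨0, ?_⟩
      rintro c ⟨v, -, rfl⟩
      unfold ray
      apply div_nonneg
      · exact integral_nonneg (fun x => by positivity)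
      · exact Real.rpow_nonneg (integral_nonneg (fun x => by positivity)) _
    · exact ⟨u, hmem, rfl⟩
  refine hle.trans ?_
  unfold ray
  have hfin : Module.finrank ℝ (E N) = N := by simp
  have hscale : ∀ F : E N → ℝ, ∫ x : E N, F (α • (x - z)) = (α ^ N)⁻¹ * ∫ x, F x := by
    intro F
    rw [integral_sub_right_eq_self (fun x => F (α • x)) z, Measure.integral_comp_smul, hfin,
      abs_of_pos (by positivity), smul_eq_mul]
  have hscalei : ∀ F : E N → ℝ, Integrable F → Integrable (fun x : E N => F (α • (x - z))) := by
    intro F hF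
    exact (hF.comp_smul hα0.ne').comp_sub_right z
  have hgr : ∀ x, ‖gradient u x‖ ^ 2 = α ^ 2 * ‖fderiv ℝ φ (α • (x - z))‖ ^ 2 := by
    intro x
    rw [norm_gradient]
    have hd : HasFDerivAt u ((fderiv ℝ φ (α • (x - z))).comp
        (α • ContinuousLinearMap.id ℝ (E N))) x := by
      apply HasFDerivAt.comp
      · exact (hφd.differentiable one_ne_zero _).hasFDerivAt
      · exact ((hasFDerivAt_id x).sub_const z).const_smul α
    rw [hd.fderiv, ContinuousLinearMap.comp_smul, ContinuousLinearMap.comp_id, norm_smul,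
      Real.norm_eq_abs, abs_of_pos hα0]
    ring
  have e2 : 2 / (2 * q - 1 + 1) = 1 / q := by
    rw [sub_add_cancel]; field_simp
  rw [e2, sub_add_cancel]
  apply div_le_div₀
  · have : 0 ≤ ∫ x : E N, ‖fderiv ℝ φ x‖ ^ 2 := integral_nonneg (fun x => by positivity)
    positivity
  · rw [← hscale (fun x => ‖fderiv ℝ φ x‖ ^ 2), ← integral_const_mul]
    simp_rw [hgr]
    apply setIntegral_le_integral
    · exact (hscalei _ hi1).const_mul _
    · filter_upwards with x
      show 0 ≤ _
      positivity
  · positivity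
  · apply Real.rpow_le_rpow (by positivity) _ (by positivity)
    rw [mul_left_comm, ← hscale (fun x => |φ x| ^ (2 * q)), ← integral_const_mul]
    have hz : ∀ x, x ∉ ball (0 : E N) 1 → Real.exp (-4) * |φ (α • (x - z))| ^ (2 * q) = 0 := by
      intro x hx
      have : u x = 0 := by
        by_contra hcon
        exact hx (by simpa using (hin x hcon).1)
      have h' : φ (α • (x - z)) = 0 := this
      rw [h', abs_zero, Real.zero_rpow (by linarith), mul_zero]
    rw [← setIntegral_eq_integral_of_forall_compl_eq_zero hz]
    apply integral_mono_of_nonneg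
    · filter_upwards with x
      show 0 ≤ _
      positivity
    · have hc : ContinuousOn (fun x : E N => ‖x‖ ^ α * |u x| ^ (2 * q)) (closedBall 0 1) := by
        apply ContinuousOn.mul
        · exact (continuous_norm.continuousOn).rpow_const (fun x _ => Or.inr hα0.le)
        · exact (huc.continuous.continuousOn.abs).rpow_const
            (fun x _ => Or.inr (by linarith))
      exact (hc.integrableOn_compact (isCompact_closedBall _ _)).mono_set ball_subset_closedBall
    · filter_upwards with x
      by_cases hx : u x = 0
      · have h' : φ (α • (x - z)) = 0 := hx
        simp only [hx, h', abs_zero, Real.zero_rpow (by linarith : 2 * q ≠ 0), mul_zero, le_refl]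
      · have h1 := (hin x hx).2
        have h2 : Real.exp (-4) ≤ ‖x‖ ^ α := by
          have hα2 : 2 / α ≤ 1 / 2 := by
            have : 2 / α = 2 * (1 / α) := by ring
            linarith
          have hs : 0 < 1 - 2 / α := by linarith
          have hlog := Real.one_sub_inv_le_log_of_pos hs
          have hinv : (1 - 2 / α)⁻¹ ≤ 1 + 4 / α := by
            rw [inv_le_iff_one_le_mul₀ hs]
            have h5 : 4 / α = 2 * (2 / α) := by ring
            rw [h5]
            have h6 : 0 < 2 / α := by positivity
            nlinarith
          calc Real.exp (-4) ≤ Real.exp (Real.log (1 - 2 / α) * α) := by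
                apply Real.exp_le_exp.2
                have h7 : -(4 / α) ≤ Real.log (1 - 2 / α) := by linarith
                have h8 := mul_le_mul_of_nonneg_right h7 hα0.le
                have h9 : -(4 / α) * α = -4 := by field_simp
                linarith
            _ = (1 - 2 / α) ^ α := (Real.rpow_def_of_pos hs α).symm
            _ ≤ ‖x‖ ^ α := Real.rpow_le_rpow hs.le h1 hα0.le
        show Real.exp (-4) * |u x| ^ (2 * q) ≤ _
        gcongr
/-- Smets–Su–Willem symmetry breaking: for α large no minimizer of the Rayleigh
quotient R_{α,p} over 𝒞 is radial. -/
theorem stmt4 {N : ℕ} (hN : 2 ≤ N) (p : ℝ) (hp : 1 < p)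
    (hsub : 3 ≤ N → p + 1 < 2 * (N : ℝ) / ((N : ℝ) - 2)) :
    ∃ αstar : ℝ, 0 < αstar ∧ ∀ α : ℝ, αstar < α →
      ∀ u : E N → ℝ, memC u → ray α p u = Sval N α p →
        ∃ x y : E N, x ∈ ball (0 : E N) 1 ∧ y ∈ ball (0 : E N) 1 ∧
          ‖x‖ = ‖y‖ ∧ u x ≠ u y := by
  have : Nonempty (Fin N) := ⟨⟨0, by omega⟩⟩
  obtain ⟨q, rfl⟩ : ∃ q : ℝ, p = 2 * q - 1 := ⟨(p + 1) / 2, by ring⟩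
  have hq : 1 < q := by linarith
  have hq0 : 0 < q := by linarith
  clear hsub
  have hN2 : (2:ℝ) ≤ N := by exact_mod_cast hN
  obtain ⟨P, Q, hQ, hP, hup⟩ := upper hN q hq
  obtain ⟨c, hcdef⟩ : ∃ c : ℝ, c = N * (volume : Measure (E N)).real (ball 0 1) := ⟨_, rfl⟩
  have hc : 0 < c := by
    rw [hcdef]
    have : 0 < (volume : Measure (E N)).real (ball 0 1) :=
      ENNReal.toReal_pos (measure_ball_pos _ _ one_pos).ne' measure_ball_lt_top.ne
    have : (0:ℝ) < N := by linarith
    positivity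
  have hK : 0 < Real.Gamma (q + 1) := Real.Gamma_pos_of_pos (by linarith)
  set K := Real.Gamma (q + 1)
  obtain ⟨M, hMdef⟩ : ∃ M : ℝ, M = c ^ (1 / q) * (1 / c) * (2 ^ (1 + 1 / q) * K ^ (1 / q)) :=
    ⟨_, rfl⟩
  have hM : 0 < M := by rw [hMdef]; positivity
  set θ : ℝ := (N - 1) * (1 - 1 / q) with hθ
  have hθ0 : 0 < θ := by
    have : 1 / q < 1 := by rw [div_lt_one hq0]; exact hq
    apply mul_pos <;> linarith
  obtain ⟨a0, ha0⟩ := (((tendsto_rpow_atTop hθ0).eventually_gt_atTop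
    (M * P / Q ^ (1 / q)))).exists_forall_of_atTop
  refine ⟨max (max a0 4) (2 * ((N - 1) * q)), by positivity, ?_⟩
  intro α hα u hu heq
  have hα1 : a0 < α := lt_of_le_of_lt ((le_max_left _ _).trans (le_max_left _ _)) hα
  have hα4 : 4 < α := lt_of_le_of_lt ((le_max_right _ _).trans (le_max_left _ _)) hα
  have hα2 : 2 * ((N - 1) * q) < α := lt_of_le_of_lt (le_max_right _ _) hα
  have hα0 : 0 < α := by linarith
  have hNq : 0 < ((N:ℝ) - 1) * q := mul_pos (by linarith) hq0
  by_contra hcon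
  push Not at hcon
  have hlow := lower hN α q (by linarith) hq u hu hcon c hcdef hc
  have hdpos := den_pos hN α (2 * q - 1) hα0 hp u hu
  have hupα := hup α hα4
  rw [← heq] at hupα
  unfold ray at hupα
  have e2 : 2 / (2 * q - 1 + 1) = 1 / q := by
    rw [sub_add_cancel]; field_simp
  rw [e2, sub_add_cancel] at hupα
  rw [sub_add_cancel] at hdpos
  have hn0 : 0 ≤ ∫ x in ball (0 : E N) 1, ‖gradient u x‖ ^ 2 :=
    integral_nonneg (fun x => by positivity)
  generalize (∫ x in ball (0 : E N) 1, ‖gradient u x‖ ^ 2) = n at *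
  generalize (∫ x in ball (0 : E N) 1, ‖x‖ ^ α * |u x| ^ (2 * q)) = d at *
  have hγ : 1 / (α - (N - 1) * q) ≤ 2 / α := by
    rw [div_le_div_iff₀ (by linarith) hα0]; linarith
  have hγ0 : 0 ≤ 1 / (α - (N - 1) * q) := by
    apply one_div_nonneg.2; linarith
  have hd : d ≤ c * ((n / c) ^ q * ((2 / α) ^ (q + 1) * K)) := by
    refine hlow.trans ?_
    gcongr
  have hd1 : d ^ (1 / q) ≤ n * M * (α ^ (1 + 1 / q))⁻¹ := by
    calc d ^ (1 / q) ≤ (c * ((n / c) ^ q * ((2 / α) ^ (q + 1) * K))) ^ (1 / q) :=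
          Real.rpow_le_rpow hdpos.le hd (by positivity)
      _ = n * M * (α ^ (1 + 1 / q))⁻¹ := by
          rw [Real.mul_rpow hc.le (by positivity), Real.mul_rpow (by positivity) (by positivity),
            Real.mul_rpow (by positivity) hK.le, ← Real.rpow_mul (by positivity),
            ← Real.rpow_mul (by positivity), mul_one_div_cancel hq0.ne', Real.rpow_one,
            show (q + 1) * (1 / q) = 1 + 1 / q by field_simp, Real.div_rpow (by norm_num) hα0.le,
            hMdef]
          ring
  have hdq : 0 < d ^ (1 / q) := Real.rpow_pos_of_pos hdpos _
  have hαr : 0 < α ^ (1 + 1 / q) := by positivity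
  have hl : α ^ (1 + 1 / q) / M ≤ n / d ^ (1 / q) := by
    rw [div_le_div_iff₀ hM hdq]
    calc α ^ (1 + 1 / q) * d ^ (1 / q) ≤ α ^ (1 + 1 / q) * (n * M * (α ^ (1 + 1 / q))⁻¹) := by
          gcongr
      _ = n * M := by field_simp
  have hfin := hl.trans hupα
  have hright : (α ^ 2 * ((α ^ N)⁻¹ * P)) / ((α ^ N)⁻¹ * Q) ^ (1 / q)
      = α ^ (1 + 1 / q) * (α ^ θ)⁻¹ * (P / Q ^ (1 / q)) := by
    rw [Real.mul_rpow (by positivity) hQ.le]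
    have h1 : ((α ^ N)⁻¹ : ℝ) = α ^ (-(N:ℝ)) := by
      rw [Real.rpow_neg hα0.le, Real.rpow_natCast]
    have h2 : (α ^ 2 : ℝ) = α ^ (2:ℝ) := (Real.rpow_two α).symm
    rw [h1, h2, ← Real.rpow_mul hα0.le, ← mul_assoc, ← Real.rpow_add hα0,
      ← Real.rpow_neg hα0.le, ← Real.rpow_add hα0, mul_div_mul_comm, ← Real.rpow_sub hα0]
    congr 2
    rw [hθ]; field_simp; ring
  rw [hright] at hfin
  have hbig := ha0 α hα1.le
  have hαθ : 0 < α ^ θ := by positivity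
  have : α ^ θ ≤ M * P / Q ^ (1 / q) := by
    have h3 : α ^ (1 + 1 / q) / M = α ^ (1 + 1 / q) * (1 / M) := by ring
    rw [h3, mul_assoc] at hfin
    have h4 := le_of_mul_le_mul_left hfin hαr
    rw [div_le_iff₀ hM, inv_mul_eq_div, div_mul_eq_mul_div, le_div_iff₀ hαθ] at h4
    calc α ^ θ = 1 * α ^ θ := by ring
      _ ≤ _ := h4
      _ = _ := by ring
  linarith
end
end

section
/- Let N ≥ 3 and p > 1 with p + 1 < 2N/(N-2). Then there exist C > 0 and α₀ > 0 such that for every α ≥ α₀ there is a function u_α ∈ 𝒞 with R_{α,p}(u_α) ≤ C α^{2 - N + 2N/(p+1)}; in particular S_{α,p} ≤ C α^{2 - N + 2N/(p+1)} for all α ≥ α₀. -/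
open MeasureTheory Metric Set Filter

noncomputable section

lemma ray_nonneg' {N : ℕ} (α p : ℝ) (u : E N → ℝ) : 0 ≤ ray α p u := by
  unfold ray
  refine div_nonneg (integral_nonneg fun x => by positivity) (Real.rpow_nonneg ?_ _)
  exact integral_nonneg fun x => by positivity

lemma integral_scale {N : ℕ} (f : E N → ℝ) (α : ℝ) (hα : 0 < α) (c : E N) :
    ∫ x, f (α • (x - c)) = α ^ (-(N : ℝ)) * ∫ x, f x := by
  rw [integral_sub_right_eq_self (μ := volume) (fun x => f (α • x)) c,
    Measure.integral_comp_smul]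
  simp only [finrank_euclideanSpace, Fintype.card_fin, smul_eq_mul]
  rw [Real.rpow_neg hα.le, Real.rpow_natCast, abs_of_pos (by positivity)]

lemma low_bound (α : ℝ) (hα : 4 ≤ α) (t : ℝ) (ht : 1 - 2 / α ≤ t) : 1 / 16 ≤ t ^ α := by
  have h0 : 0 < α := by linarith
  have h2 : 2 / α ≤ 1 / 2 := by rw [div_le_div_iff₀ h0 two_pos]; linarith
  have h1 : (1 : ℝ) + (α / 4) * (-(2 / α)) ≤ (1 + -(2 / α)) ^ (α / 4) :=
    one_add_mul_self_le_rpow_one_add (by linarith) (by linarith)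
  have h3 : (1 : ℝ) + (α / 4) * (-(2 / α)) = 1 / 2 := by field_simp; norm_num
  have h4 : (1 / 2 : ℝ) ≤ t ^ (α / 4) := by
    rw [← h3]
    exact h1.trans (Real.rpow_le_rpow (by linarith) (by linarith) (by linarith))
  have ht0 : 0 ≤ t := by linarith
  calc (1 / 16 : ℝ) = (1 / 2) ^ 4 := by norm_num
    _ ≤ (t ^ (α / 4)) ^ 4 := by gcongr
    _ = t ^ α := by
      rw [← Real.rpow_natCast, ← Real.rpow_mul ht0]
      congr 1; push_cast; ring

lemma final_calc (n α G M q I J : ℝ) (hα : 0 < α) (hM : 0 < M) (hG : 0 ≤ G) (hq : 0 ≤ q)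
    (hI : I ≤ α ^ (2 : ℝ) * (α ^ (-n) * G)) (hJ : 1 / 16 * (α ^ (-n) * M) ≤ J) :
    I / J ^ q ≤ (G / (M / 16) ^ q + 1) * α ^ (2 - n + n * q) := by
  have hA : 0 < α ^ (-n) := Real.rpow_pos_of_pos hα _
  have hJ0 : 0 < 1 / 16 * (α ^ (-n) * M) := by positivity
  calc I / J ^ q ≤ (α ^ (2 : ℝ) * (α ^ (-n) * G)) / (1 / 16 * (α ^ (-n) * M)) ^ q := by
        gcongr
    _ = G / (M / 16) ^ q * α ^ (2 - n + n * q) := by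
        rw [show 1 / 16 * (α ^ (-n) * M) = α ^ (-n) * (M / 16) by ring,
          Real.mul_rpow hA.le (by positivity), ← Real.rpow_mul hα.le,
          show 2 - n + n * q = 2 + -n - (-n * q) by ring, Real.rpow_sub hα, Real.rpow_add hα]
        have : 0 < α ^ (-n * q) := Real.rpow_pos_of_pos hα _
        have : 0 < (M / 16) ^ q := by positivity
        field_simp
    _ ≤ _ := by
        gcongr
        linarith

theorem stmt6 {N : ℕ} (hN : 3 ≤ N) (p : ℝ) (hp : 1 < p)
    (hsub : p + 1 < 2 * (N : ℝ) / ((N : ℝ) - 2)) :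
    ∃ C α₀ : ℝ, 0 < C ∧ 0 < α₀ ∧
      ∀ α : ℝ, α₀ ≤ α →
        (∃ u : E N → ℝ, memC u ∧
          ray α p u ≤ C * α ^ (2 - (N : ℝ) + 2 * (N : ℝ) / (p + 1))) ∧
        Sval N α p ≤ C * α ^ (2 - (N : ℝ) + 2 * (N : ℝ) / (p + 1)) := by
  let φ : ContDiffBump (0 : E N) := ⟨1 / 2, 1, by norm_num, by norm_num⟩
  have hφc : ContDiff ℝ 1 (φ : E N → ℝ) := φ.contDiff
  have hφ0 : ∀ y : E N, 1 ≤ ‖y‖ → φ y = 0 := fun y hy =>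
    φ.zero_of_le_dist (by simpa [φ] using hy)
  let g : E N → ℝ := fun y => ‖fderiv ℝ φ y‖ ^ 2
  let m : E N → ℝ := fun y => |φ y| ^ (p + 1)
  have hgcont : Continuous g := (hφc.continuous_fderiv (by norm_num)).norm.pow 2
  have hgsupp : HasCompactSupport g :=
    (φ.hasCompactSupport.fderiv (𝕜 := ℝ)).comp_left (g := fun L => ‖L‖ ^ 2) (by simp)
  have hmcont : Continuous m :=
    hφc.continuous.abs.rpow_const fun x => Or.inr (by linarith)
  have hmsupp : HasCompactSupport m :=
    φ.hasCompactSupport.comp_left (g := fun t : ℝ => |t| ^ (p + 1))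
      (by simp [Real.zero_rpow (by linarith : p + 1 ≠ 0)])
  have hφ1 : φ (0 : E N) = 1 := φ.one_of_mem_closedBall (by simp [φ])
  have hM : 0 < ∫ y, m y :=
    hmcont.integral_pos_of_hasCompactSupport_nonneg_nonzero hmsupp
      (fun y => by positivity) (x := 0) (by simp [m, hφ1])
  have hG : 0 ≤ ∫ y, g y := integral_nonneg fun y => by positivity
  refine ⟨(∫ y, g y) / ((∫ y, m y) / 16) ^ (2 / (p + 1)) + 1, 4, by positivity, by norm_num, ?_⟩
  intro α hα
  have h0 : 0 < α := by linarith
  have hinv : 1 / α ≤ 1 := by rw [div_le_one h0]; linarith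
  suffices h : ∃ u : E N → ℝ, memC u ∧
      ray α p u ≤ ((∫ y, g y) / ((∫ y, m y) / 16) ^ (2 / (p + 1)) + 1) *
        α ^ (2 - (N : ℝ) + 2 * (N : ℝ) / (p + 1)) by
    refine ⟨h, ?_⟩
    obtain ⟨u, hu, hr⟩ := h
    refine le_trans (csInf_le ⟨0, ?_⟩ ⟨u, hu, rfl⟩) hr
    rintro _ ⟨v, _, rfl⟩
    exact ray_nonneg' α p v
  let c : E N := EuclideanSpace.single (⟨0, by omega⟩ : Fin N) (1 - 1 / α)
  have hc : ‖c‖ = 1 - 1 / α := by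
    simp only [c, EuclideanSpace.norm_single, Real.norm_eq_abs]
    exact abs_of_nonneg (by linarith)
  let u : E N → ℝ := fun x => φ (α • (x - c))
  have hu : ContDiff ℝ 1 u := hφc.comp (by fun_prop)
  -- the support condition
  have hux : ∀ x, 1 / α ≤ ‖x - c‖ → u x = 0 := by
    intro x hx
    apply hφ0
    rw [norm_smul, Real.norm_eq_abs, abs_of_pos h0]
    rw [div_le_iff₀ h0] at hx
    linarith
  have hout : ∀ x : E N, 1 ≤ ‖x‖ → u x = 0 := by
    intro x hx
    apply hux
    have := norm_sub_norm_le x c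
    linarith
  have hder : ∀ x, ‖gradient u x‖ ^ 2 = α ^ (2 : ℝ) * g (α • (x - c)) := by
    intro x
    have h1 : ‖gradient u x‖ = ‖fderiv ℝ u x‖ := by
      simp [gradient]
    have h2 : HasFDerivAt u (α • fderiv ℝ φ (α • (x - c))) x := by
      have h3 : HasFDerivAt (fun x : E N => α • (x - c))
          (α • ContinuousLinearMap.id ℝ (E N)) x :=
        ((hasFDerivAt_id x).sub_const c).const_smul α
      have h4 := ((hφc.differentiable (by norm_num)) (α • (x - c))).hasFDerivAt.comp x h3
      have h5 : α • fderiv ℝ φ (α • (x - c)) =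
          (fderiv ℝ φ (α • (x - c))).comp (α • ContinuousLinearMap.id ℝ (E N)) := by
        ext v; simp
      rw [h5]
      exact h4
    rw [h1, h2.fderiv, norm_smul, Real.norm_eq_abs, abs_of_pos h0, mul_pow]
    norm_num [g]
  have hcomp : ∀ f : E N → ℝ, Continuous f → HasCompactSupport f →
      Integrable (fun x => f (α • (x - c))) := by
    intro f hf hs
    have h1 : Integrable (fun x => f (α • x)) :=
      (hf.integrable_of_hasCompactSupport hs).comp_smul h0.ne'
    exact h1.comp_sub_right c
  refine ⟨u, ⟨hu.contDiffOn, fun x hx => hout x hx.ge, c, ?_, ?_⟩, ?_⟩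
  · simp only [mem_closedBall, dist_zero_right, hc]
    have : 0 < 1 / α := by positivity
    linarith
  · simp [u, hφ1]
  rw [show 2 * (N : ℝ) / (p + 1) = N * (2 / (p + 1)) by ring]
  unfold ray
  refine final_calc N α _ _ _ _ _ h0 hM hG (by positivity) ?_ ?_
  · rw [← integral_scale g α h0 c, ← integral_const_mul]
    simp only [hder]
    exact setIntegral_le_integral ((hcomp g hgcont hgsupp).const_mul _)
      (Eventually.of_forall fun x => by positivity)
  · have hmi := hcomp m hmcont hmsupp
    have hm0 : ∀ x, u x = 0 → m (α • (x - c)) = 0 := by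
      intro x hx
      have : φ (α • (x - c)) = 0 := hx
      simp [m, this, Real.zero_rpow (by linarith : p + 1 ≠ 0)]
    rw [← integral_scale m α h0 c, ← integral_const_mul,
      ← setIntegral_eq_integral_of_forall_compl_eq_zero (s := ball (0 : E N) 1)]
    · refine setIntegral_mono_on (hmi.const_mul _).integrableOn ?_ measurableSet_ball ?_
      · have hcont : Continuous fun x : E N => ‖x‖ ^ α * |u x| ^ (p + 1) :=
          (continuous_norm.rpow_const fun x => Or.inr h0.le).mul
            (hu.continuous.abs.rpow_const fun x => Or.inr (by linarith))
        exact (hcont.continuousOn.integrableOn_compact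
          (isCompact_closedBall (0 : E N) 1)).mono_set ball_subset_closedBall
      · intro x _
        by_cases hx : 1 / α ≤ ‖x - c‖
        · rw [hm0 x (hux x hx), mul_zero]
          positivity
        · have h1 : 1 - 2 / α ≤ ‖x‖ := by
            have h2 := norm_sub_norm_le c x
            rw [norm_sub_rev] at h2
            have h3 : 2 / α = 1 / α + 1 / α := by ring
            linarith
          exact mul_le_mul_of_nonneg_right (low_bound α hα _ h1) (by positivity)
    · intro x hx
      rw [hm0 x (hout x (by simpa using hx)), mul_zero]
end
end
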